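/- arXiv:2604.03352 — 6 statements merged into one kernel-verified Lean document; each statement's English description precedes it below -/
import Mathlib

section
/- Let K be a Markov kernel on a measurable space X that is reversible with respect to a probability measure π and has absolute spectral gap γ ∈ (0,1]. Let μ be a probability measure on X that is absolutely continuous with respect to π and whose density dμ/dπ lies in L²(π). Then for every integer p ≥ 0, χ²(μK^p ∣ π) ≤ (1−γ)^{2p} · χ²(μ ∣ π). -/
open MeasureTheory

/-- `μ K^p` : p-fold action of the kernel `K` on the measure `μ`. -/
noncomputable def iterBind {X : Type*} [MeasurableSpace X] (K : X → Measure X) :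
    ℕ → Measure X → Measure X
  | 0, μ => μ
  | p + 1, μ => (iterBind K p μ).bind K

/-- Reversibility of the kernel `K` with respect to `π`:
`π(dx)K(x,dy) = π(dy)K(y,dx)` as measures on `X × X`. -/
def Reversible {X : Type*} [MeasurableSpace X] (K : X → Measure X) (π : Measure X) : Prop :=
  ∀ A B : Set X, MeasurableSet A → MeasurableSet B →
    ∫⁻ x in A, K x B ∂π = ∫⁻ x in B, K x A ∂π

/-- `K` has absolute spectral gap `γ`: for every zero-mean `h ∈ L²(π)`,
`‖Kh‖_{L²(π)} ≤ (1-γ)‖h‖_{L²(π)}` (stated with squared norms). -/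
def HasAbsSpectralGap {X : Type*} [MeasurableSpace X] (K : X → Measure X) (π : Measure X)
    (γ : ℝ) : Prop :=
  ∀ h : X → ℝ, MemLp h 2 π → ∫ x, h x ∂π = 0 →
    ∫ x, (∫ y, h y ∂(K x)) ^ 2 ∂π ≤ (1 - γ) ^ 2 * ∫ x, (h x) ^ 2 ∂π

/-- `χ²(μ ∣ π) = ∫ (dμ/dπ − 1)² dπ`. -/
noncomputable def chiSq {X : Type*} [MeasurableSpace X] (μ π : Measure X) : ℝ :=
  ∫ x, ((μ.rnDeriv π x).toReal - 1) ^ 2 ∂π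


/-!
Integration against `κ` is dual to the action of `κ` on densities:
`∫ (d(μκ)/d(πκ) - 1) h d(πκ) = ∫ (dμ/dπ - 1) (κh) dπ`. For `h = d(μκ)/d(πκ) - 1`, which has mean
zero, the left side is `χ²(μκ ∣ πκ)`. If `πκ = π`, Cauchy–Schwarz and the spectral gap bound the
square of the right side by `χ²(μ ∣ π) (1 - γ)² χ²(μκ ∣ π)`, so one step of the kernel contracts
`χ²` by the factor `(1 - γ)²`.

The required `L²` membership is read off the joint law `π ⊗ₘ κ`: there `κh` is the conditional
expectation of `h` given the first coordinate, and `d(μκ)/d(πκ)` that of `dμ/dπ` given the second,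
and conditional expectations preserve `Lᵖ` for `p ≥ 1`.
-/

section

open ProbabilityTheory

variable {X Y : Type*} [mX : MeasurableSpace X] [mY : MeasurableSpace Y]
  {μ π : Measure X} {κ : Kernel X Y} {q : ENNReal}

theorem sq_integral_mul_le {f g : X → ℝ} (hf : MemLp f 2 μ) (hg : MemLp g 2 μ) :
    (∫ x, f x * g x ∂μ) ^ 2 ≤ (∫ x, f x ^ 2 ∂μ) * ∫ x, g x ^ 2 ∂μ := by
  have inner_toLp {u v : X → ℝ} (hu : MemLp u 2 μ) (hv : MemLp v 2 μ) :
      inner ℝ (hu.toLp u) (hv.toLp v) = ∫ x, u x * v x ∂μ := by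
    rw [L2.inner_def]
    refine integral_congr_ae ?_
    filter_upwards [hu.coeFn_toLp, hv.coeFn_toLp] with x hux hvx
    rw [hux, hvx, Real.inner_apply]
  simpa only [inner_toLp, ← sq] using real_inner_mul_inner_self_le (hf.toLp f) (hg.toLp g)

theorem memLp_comp_measurePreserving_iff {E : Type*} [TopologicalSpace E] [ContinuousENorm E]
    {ν : Measure Y} {f : X → Y} {g : Y → E}
    (hf : MeasurePreserving f μ ν) (hg : AEStronglyMeasurable g ν) :
    MemLp (g ∘ f) q μ ↔ MemLp g q ν := by
  rw [← hf.map_eq] at hg ⊢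
  exact (memLp_map_measure_iff hg hf.aemeasurable).symm

theorem integral_toReal_rnDeriv_sub_one_mul [SigmaFinite μ] [SigmaFinite π] (hac : μ ≪ π)
    {h : X → ℝ} (hμ : Integrable h μ) (hπ : Integrable h π) :
    ∫ x, ((μ.rnDeriv π x).toReal - 1) * h x ∂π = ∫ x, h x ∂μ - ∫ x, h x ∂π := by
  simp only [sub_mul, one_mul]
  rw [integral_sub ((integrable_toReal_rnDeriv_mul_iff hac).2 hμ) hπ,
    integral_toReal_rnDeriv_mul hac]

theorem integral_toReal_rnDeriv_sub_one [IsProbabilityMeasure μ] [IsProbabilityMeasure π]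
    (hac : μ ≪ π) : ∫ x, ((μ.rnDeriv π x).toReal - 1) ∂π = 0 := by
  simpa using integral_toReal_rnDeriv_sub_one_mul hac (integrable_const 1) (integrable_const 1)

variable {E : Type*} [NormedAddCommGroup E] [NormedSpace ℝ E]

theorem integrable_integral_kernel {h : Y → E} (hh : Integrable h (κ ∘ₘ π)) :
    Integrable (fun x => ∫ y, h y ∂κ x) π := by
  rw [Measure.comp_eq_comp_const_apply] at hh
  simpa only [Kernel.const_apply] using hh.integral_comp

theorem integral_comp_measure {h : Y → E} (hh : Integrable h (κ ∘ₘ π)) :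
    ∫ y, h y ∂(κ ∘ₘ π) = ∫ x, ∫ y, h y ∂κ x ∂π := by
  rw [Measure.comp_eq_comp_const_apply] at hh ⊢
  simpa only [Kernel.const_apply] using Kernel.integral_comp hh

theorem measurePreserving_fst_compProd [SFinite π] [IsMarkovKernel κ] :
    MeasurePreserving Prod.fst (π ⊗ₘ κ) π :=
  ⟨measurable_fst, Measure.fst_compProd π κ⟩

theorem measurePreserving_snd_compProd [SFinite π] [IsSFiniteKernel κ] :
    MeasurePreserving Prod.snd (π ⊗ₘ κ) (κ ∘ₘ π) :=
  ⟨measurable_snd, Measure.snd_compProd π κ⟩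

theorem integral_kernel_fst_ae_eq_condExp [CompleteSpace E] [IsFiniteMeasure π]
    [IsMarkovKernel κ] {h : Y → E} (hh : Integrable h (κ ∘ₘ π)) :
    (fun z : X × Y => ∫ y, h y ∂κ z.1) =ᵐ[π ⊗ₘ κ]
      (π ⊗ₘ κ)[fun z => h z.2 | mX.comap Prod.fst] := by
  have hκh : Integrable (fun x => ∫ y, h y ∂κ x) π := integrable_integral_kernel hh
  have hκh_fst : Integrable (fun z : X × Y => ∫ y, h y ∂κ z.1) (π ⊗ₘ κ) :=
    measurePreserving_fst_compProd.integrable_comp_of_integrable hκh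
  have hh_snd : Integrable (fun z : X × Y => h z.2) (π ⊗ₘ κ) :=
    measurePreserving_snd_compProd.integrable_comp_of_integrable hh
  refine ae_eq_condExp_of_forall_setIntegral_eq measurable_fst.comap_le hh_snd
    (fun _ _ _ => hκh_fst.integrableOn) ?_ ?_
  · rintro _ ⟨s, hs, rfl⟩ _
    rw [← Set.prod_univ, Measure.setIntegral_compProd hs .univ hκh_fst.integrableOn,
      Measure.setIntegral_compProd hs .univ hh_snd.integrableOn]
    simp only [Measure.restrict_univ, integral_const, probReal_univ, one_smul]
  · have hκh_map : AEStronglyMeasurable (fun x => ∫ y, h y ∂κ x) ((π ⊗ₘ κ).map Prod.fst) := by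
      rw [measurePreserving_fst_compProd.map_eq]
      exact hκh.aestronglyMeasurable
    exact hκh_map.comp_ae_measurable' measurable_fst.aemeasurable

theorem toReal_rnDeriv_comp_snd_ae_eq_condExp [IsFiniteMeasure μ] [IsFiniteMeasure π]
    [IsFiniteKernel κ] (hac : μ ≪ π) :
    (fun z : X × Y => ((κ ∘ₘ μ).rnDeriv (κ ∘ₘ π) z.2).toReal) =ᵐ[π ⊗ₘ κ]
      (π ⊗ₘ κ)[fun z => (μ.rnDeriv π z.1).toReal | mY.comap Prod.snd] := by
  rw [← Measure.snd_compProd μ, ← Measure.snd_compProd π]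
  refine (toReal_rnDeriv_map (hac.compProd_left κ) measurable_snd).trans (condExp_congr_ae ?_)
  filter_upwards [rnDeriv_measure_compProd_left μ π κ] with z hz using by rw [hz]

theorem memLp_integral_kernel [CompleteSpace E] [IsFiniteMeasure π] [IsMarkovKernel κ]
    (hq : 1 ≤ q) {h : Y → E} (hh : MemLp h q (κ ∘ₘ π)) :
    MemLp (fun x => ∫ y, h y ∂κ x) q π := by
  have hκh_fst : MemLp (fun z : X × Y => ∫ y, h y ∂κ z.1) q (π ⊗ₘ κ) :=
    ((hh.comp_measurePreserving measurePreserving_snd_compProd).condExp hq).ae_eq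
      (integral_kernel_fst_ae_eq_condExp (hh.integrable hq)).symm
  have hκh : AEStronglyMeasurable (fun x => ∫ y, h y ∂κ x) π :=
    (integrable_integral_kernel (hh.integrable hq)).aestronglyMeasurable
  exact (memLp_comp_measurePreserving_iff measurePreserving_fst_compProd hκh).1 hκh_fst

theorem memLp_toReal_rnDeriv_comp [IsFiniteMeasure μ] [IsFiniteMeasure π] [IsMarkovKernel κ]
    (hq : 1 ≤ q) (hac : μ ≪ π) (hf : MemLp (fun x => (μ.rnDeriv π x).toReal) q π) :
    MemLp (fun y => ((κ ∘ₘ μ).rnDeriv (κ ∘ₘ π) y).toReal) q (κ ∘ₘ π) := by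
  have hg_snd : MemLp (fun z : X × Y => ((κ ∘ₘ μ).rnDeriv (κ ∘ₘ π) z.2).toReal) q (π ⊗ₘ κ) :=
    ((hf.comp_measurePreserving measurePreserving_fst_compProd).condExp hq).ae_eq
      (toReal_rnDeriv_comp_snd_ae_eq_condExp hac).symm
  have hg : AEStronglyMeasurable (fun y => ((κ ∘ₘ μ).rnDeriv (κ ∘ₘ π) y).toReal) (κ ∘ₘ π) :=
    (Measure.measurable_rnDeriv _ _).ennreal_toReal.aestronglyMeasurable
  exact (memLp_comp_measurePreserving_iff measurePreserving_snd_compProd hg).1 hg_snd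

theorem integral_toReal_rnDeriv_comp_sub_one_mul [IsFiniteMeasure μ] [IsFiniteMeasure π]
    [IsFiniteKernel κ] (hac : μ ≪ π) {h : Y → ℝ} (hμ : Integrable h (κ ∘ₘ μ))
    (hπ : Integrable h (κ ∘ₘ π)) :
    ∫ y, (((κ ∘ₘ μ).rnDeriv (κ ∘ₘ π) y).toReal - 1) * h y ∂(κ ∘ₘ π) =
      ∫ x, ((μ.rnDeriv π x).toReal - 1) * ∫ y, h y ∂κ x ∂π := by
  rw [integral_toReal_rnDeriv_sub_one_mul (hac.comp_right κ) hμ hπ,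
    integral_toReal_rnDeriv_sub_one_mul hac (integrable_integral_kernel hμ)
      (integrable_integral_kernel hπ), integral_comp_measure hμ, integral_comp_measure hπ]

theorem chiSq_nonneg : 0 ≤ chiSq μ π :=
  integral_nonneg fun _ => sq_nonneg _

theorem sq_chiSq_comp_le [IsFiniteMeasure μ] [IsFiniteMeasure π] [IsMarkovKernel κ]
    (hac : μ ≪ π) (hf : MemLp (fun x => (μ.rnDeriv π x).toReal) 2 π) :
    chiSq (κ ∘ₘ μ) (κ ∘ₘ π) ^ 2 ≤
      chiSq μ π * ∫ x, (∫ y, (((κ ∘ₘ μ).rnDeriv (κ ∘ₘ π) y).toReal - 1) ∂κ x) ^ 2 ∂π := by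
  set h : Y → ℝ := fun y => ((κ ∘ₘ μ).rnDeriv (κ ∘ₘ π) y).toReal - 1 with h_def
  have hg : MemLp (fun y => ((κ ∘ₘ μ).rnDeriv (κ ∘ₘ π) y).toReal) 2 (κ ∘ₘ π) :=
    memLp_toReal_rnDeriv_comp one_le_two hac hf
  have hh : MemLp h 2 (κ ∘ₘ π) := hg.sub (memLp_const 1)
  have hh_integrable : Integrable h (κ ∘ₘ μ) :=
    (integrable_toReal_rnDeriv_mul_iff (hac.comp_right κ)).1 (hg.integrable_mul hh)
  calc chiSq (κ ∘ₘ μ) (κ ∘ₘ π) ^ 2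
      = (∫ y, h y * h y ∂(κ ∘ₘ π)) ^ 2 := by simp only [chiSq, h_def, sq]
    _ = (∫ x, ((μ.rnDeriv π x).toReal - 1) * ∫ y, h y ∂κ x ∂π) ^ 2 := by
        rw [integral_toReal_rnDeriv_comp_sub_one_mul hac hh_integrable (hh.integrable one_le_two)]
    _ ≤ chiSq μ π * ∫ x, (∫ y, h y ∂κ x) ^ 2 ∂π :=
        sq_integral_mul_le (hf.sub (memLp_const 1)) (memLp_integral_kernel one_le_two hh)

theorem chiSq_comp_le_mul [IsProbabilityMeasure μ] [IsProbabilityMeasure π] [IsMarkovKernel κ]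
    (hac : μ ≪ π) (hf : MemLp (fun x => (μ.rnDeriv π x).toReal) 2 π) {c : ℝ} (hc : 0 ≤ c)
    (hκ : ∀ h : Y → ℝ, MemLp h 2 (κ ∘ₘ π) → ∫ y, h y ∂(κ ∘ₘ π) = 0 →
      ∫ x, (∫ y, h y ∂κ x) ^ 2 ∂π ≤ c * ∫ y, h y ^ 2 ∂(κ ∘ₘ π)) :
    chiSq (κ ∘ₘ μ) (κ ∘ₘ π) ≤ c * chiSq μ π := by
  have h_contract :
      ∫ x, (∫ y, (((κ ∘ₘ μ).rnDeriv (κ ∘ₘ π) y).toReal - 1) ∂κ x) ^ 2 ∂π ≤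
        c * chiSq (κ ∘ₘ μ) (κ ∘ₘ π) :=
    hκ _ ((memLp_toReal_rnDeriv_comp one_le_two hac hf).sub (memLp_const 1))
      (integral_toReal_rnDeriv_sub_one (hac.comp_right κ))
  have h_sq : chiSq (κ ∘ₘ μ) (κ ∘ₘ π) ^ 2 ≤ chiSq μ π * (c * chiSq (κ ∘ₘ μ) (κ ∘ₘ π)) :=
    (sq_chiSq_comp_le hac hf).trans (mul_le_mul_of_nonneg_left h_contract chiSq_nonneg)
  rcases (chiSq_nonneg (μ := κ ∘ₘ μ) (π := κ ∘ₘ π)).eq_or_lt with h_zero | h_pos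
  · exact h_zero ▸ mul_nonneg hc chiSq_nonneg
  · exact le_of_mul_le_mul_left (by linarith) h_pos

theorem iterBind_succ' (K : X → Measure X) (p : ℕ) (μ : Measure X) :
    iterBind K (p + 1) μ = iterBind K p (μ.bind K) := by
  induction p with
  | zero => rfl
  | succ p ih => exact congrArg (·.bind K) ih

theorem stmt0_general {κ : Kernel X X} [IsMarkovKernel κ] [IsProbabilityMeasure π]
    [IsProbabilityMeasure μ] {γ : ℝ} (hinv : κ.Invariant π) (hgap : HasAbsSpectralGap κ π γ)
    (hac : μ ≪ π) (hL2 : MemLp (fun x => (μ.rnDeriv π x).toReal) 2 π) (p : ℕ) :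
    chiSq (iterBind κ p μ) π ≤ (1 - γ) ^ (2 * p) * chiSq μ π := by
  induction p generalizing μ with
  | zero => simp [iterBind]
  | succ p ih =>
    have hac_comp : κ ∘ₘ μ ≪ π := hinv.def ▸ hac.comp_right κ
    have hL2_comp : MemLp (fun x => ((κ ∘ₘ μ).rnDeriv π x).toReal) 2 π := by
      simpa only [hinv.def] using memLp_toReal_rnDeriv_comp (κ := κ) one_le_two hac hL2
    have h_step : chiSq (κ ∘ₘ μ) π ≤ (1 - γ) ^ 2 * chiSq μ π := by
      simpa only [hinv.def] using chiSq_comp_le_mul (κ := κ) hac hL2 (sq_nonneg (1 - γ))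
        (fun h => by simpa only [hinv.def] using hgap h)
    calc chiSq (iterBind κ (p + 1) μ) π
        = chiSq (iterBind κ p (κ ∘ₘ μ)) π := by rw [iterBind_succ']
      _ ≤ (1 - γ) ^ (2 * p) * chiSq (κ ∘ₘ μ) π := ih hac_comp hL2_comp
      _ ≤ (1 - γ) ^ (2 * p) * ((1 - γ) ^ 2 * chiSq μ π) :=
          mul_le_mul_of_nonneg_left h_step ((even_two_mul p).pow_nonneg _)
      _ = (1 - γ) ^ (2 * (p + 1)) * chiSq μ π := by ring

end

theorem stmt0 {X : Type*} [MeasurableSpace X] (K : X → Measure X) (π μ : Measure X)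
    (hK : ∀ x, IsProbabilityMeasure (K x)) (hKmeas : Measurable K)
    [IsProbabilityMeasure π] [IsProbabilityMeasure μ]
    (γ : ℝ) (hγ : γ ∈ Set.Ioc (0 : ℝ) 1)
    (hrev : Reversible K π) (hgap : HasAbsSpectralGap K π γ)
    (hac : μ ≪ π) (hL2 : MemLp (fun x => (μ.rnDeriv π x).toReal) 2 π) :
    ∀ p : ℕ, chiSq (iterBind K p μ) π ≤ (1 - γ) ^ (2 * p) * chiSq μ π := by
  have : ProbabilityTheory.IsMarkovKernel ⟨K, hKmeas⟩ := ⟨hK⟩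
  have hinv : ProbabilityTheory.Kernel.Invariant ⟨K, hKmeas⟩ π :=
    ProbabilityTheory.Kernel.IsReversible.invariant fun A B => hrev A B
  exact stmt0_general hinv hgap hac hL2
end

section
/- Let K be a Markov kernel on a measurable space X that is reversible with respect to a probability measure π and has absolute spectral gap γ ∈ (0,1]. Let ω ≥ 1, let μ be a probability measure that is ω-warm with respect to π, and let ξ be a real with 0 < ξ ≤ ω. Then every integer p with p ≥ log(ω/ξ)/γ satisfies TV(μK^p ∣ π) ≤ ξ. -/
open MeasureTheory

/-- `μ` is `ω`-warm with respect to `π`: `μ(A) ≤ ω π(A)` for all measurable `A`. -/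
def IsWarm {X : Type*} [MeasurableSpace X] (μ π : Measure X) (ω : ℝ) : Prop :=
  ∀ A : Set X, MeasurableSet A → μ A ≤ ENNReal.ofReal ω * π A

/-!
The Markov operator `T h x = ∫ h dK(x, ·)` is dual to the action of `K` on measures, so
`∫ h d(μK^p) = ∫ T^p h dμ`. If `∫ h dπ = 0`, then by Cauchy–Schwarz and warmness
`(∫ T^p h dμ)² ≤ ∫ (T^p h)² dμ ≤ ω ∫ (T^p h)² dπ ≤ ω (1 - γ)^(2p) ∫ h² dπ`, where the last step
iterates the spectral gap. For `h = 1_A - π(A)` the last integral is the variance of `1_A`, at most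
`1/4`, so `|μK^p(A) - π(A)| ≤ √ω (1 - γ)^p / 2`; and `(1 - γ)^p ≤ exp (-γ p) ≤ ξ / ω`.
-/

open ProbabilityTheory

theorem one_sub_pow_le_inv_of_log_div_le {γ c : ℝ} (hγ : γ ∈ Set.Ioc (0 : ℝ) 1) (hc : 0 < c)
    {n : ℕ} (hn : Real.log c / γ ≤ n) : (1 - γ) ^ n ≤ c⁻¹ := by
  have h_log : Real.log c ≤ n * γ := (div_le_iff₀ hγ.1).1 hn
  calc (1 - γ) ^ n ≤ Real.exp (-γ) ^ n :=
        pow_le_pow_left₀ (sub_nonneg.2 hγ.2) (Real.one_sub_le_exp_neg γ) n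
    _ = Real.exp (-(n * γ)) := by rw [← Real.exp_nat_mul, mul_neg]
    _ ≤ Real.exp (-Real.log c) := by gcongr
    _ = c⁻¹ := by rw [Real.exp_neg, Real.exp_log hc]

section Variance

variable {X : Type*} [MeasurableSpace X] {μ : Measure X} [IsProbabilityMeasure μ]

theorem sq_integral_le_integral_sq {h : X → ℝ} (hh : MemLp h 2 μ) :
    (∫ x, h x ∂μ) ^ 2 ≤ ∫ x, h x ^ 2 ∂μ := by
  have h_var : 0 ≤ ∫ x, h x ^ 2 ∂μ - (∫ x, h x ∂μ) ^ 2 :=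
    (variance_nonneg h μ).trans_eq (variance_eq_sub hh)
  exact sub_nonneg.1 h_var

theorem variance_indicator_one_le {A : Set X} (hA : MeasurableSet A) :
    Var[A.indicator 1; μ] ≤ (1 / 2) ^ 2 := by
  have h_mem (x : X) : A.indicator (1 : X → ℝ) x ∈ Set.Icc 0 1 :=
    ⟨Set.indicator_nonneg (fun _ _ ↦ zero_le_one) x, Set.indicator_le_self' (by simp) x⟩
  simpa using variance_le_sq_of_bounded (.of_forall h_mem)
    (measurable_one.indicator hA).aemeasurable

end Variance

section MarkovOperator

variable {X Y E : Type*} [MeasurableSpace X] [MeasurableSpace Y]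
  [NormedAddCommGroup E] [NormedSpace ℝ E]

/-- The action `h ↦ Kh` of a kernel on functions, `(Kh)(x) = ∫ h(y) K(x, dy)`, dual to its action
`μ ↦ μK` on measures. As with the Bochner integral, `(Kh)(x) = 0` if `h` is not integrable with
respect to `K(x, ·)`. -/
noncomputable def markovOp (κ : Kernel X Y) (h : Y → E) : X → E :=
  fun x ↦ ∫ y, h y ∂(κ x)

theorem aestronglyMeasurable_markovOp {κ : Kernel X Y} {μ : Measure X} {h : Y → E}
    (hh : AEStronglyMeasurable h (κ ∘ₘ μ)) : AEStronglyMeasurable (markovOp κ h) μ := by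
  rw [Measure.comp_eq_comp_const_apply] at hh
  exact hh.integral_kernel_comp

theorem integral_markovOp {κ : Kernel X Y} {μ : Measure X} {h : Y → E}
    (hh : Integrable h (κ ∘ₘ μ)) : ∫ x, markovOp κ h x ∂μ = ∫ y, h y ∂(κ ∘ₘ μ) := by
  rw [Measure.comp_eq_comp_const_apply] at hh ⊢
  exact (Kernel.integral_comp hh).symm

theorem enorm_markovOp_le_eLpNorm {κ : Kernel X Y} [IsMarkovKernel κ] {h : Y → E} {x : X}
    {p : ENNReal} (hp : 1 ≤ p) (hh : AEStronglyMeasurable h (κ x)) :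
    ‖markovOp κ h x‖ₑ ≤ eLpNorm h p (κ x) :=
  calc ‖markovOp κ h x‖ₑ ≤ ∫⁻ y, ‖h y‖ₑ ∂(κ x) := enorm_integral_le_lintegral_enorm h
    _ = eLpNorm h 1 (κ x) := eLpNorm_one_eq_lintegral_enorm.symm
    _ ≤ eLpNorm h p (κ x) := eLpNorm_le_eLpNorm_of_exponent_le hp hh

theorem eLpNorm_markovOp_le {κ : Kernel X Y} [IsMarkovKernel κ] {μ : Measure X} {h : Y → E}
    {p : ENNReal} (hp : 1 ≤ p) (hh : AEStronglyMeasurable h (κ ∘ₘ μ)) :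
    eLpNorm (markovOp κ h) p μ ≤ eLpNorm h p (κ ∘ₘ μ) := by
  have hle : ∀ᵐ x ∂μ, ‖markovOp κ h x‖ₑ ≤ eLpNorm h p (κ x) :=
    (Measure.ae_ae_of_ae_comp hh.ae_eq_mk).mono fun _ hx ↦
      enorm_markovOp_le_eLpNorm hp ⟨hh.mk h, hh.stronglyMeasurable_mk, hx⟩
  obtain rfl | hp_top := eq_or_ne p ⊤
  · have h_bound : ∀ᵐ x ∂μ, ∀ᵐ y ∂(κ x), ‖h y‖ₑ ≤ eLpNorm h ⊤ (κ ∘ₘ μ) :=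
      Measure.ae_ae_of_ae_comp ae_le_eLpNormEssSup
    refine essSup_le_of_ae_le _ ?_
    filter_upwards [hle, h_bound] with x hx hx_bound
    exact hx.trans (essSup_le_of_ae_le _ hx_bound)
  · have hp0 : p ≠ 0 := (zero_lt_one.trans_le hp).ne'
    have hp_pos := ENNReal.toReal_pos hp0 hp_top
    simp only [eLpNorm_eq_lintegral_rpow_enorm_toReal hp0 hp_top] at hle ⊢
    gcongr
    rw [Measure.lintegral_bind κ.aemeasurable (hh.enorm.pow_const _)]
    refine lintegral_mono_ae (hle.mono fun x hx ↦ ?_)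
    rwa [one_div, ENNReal.le_rpow_inv_iff hp_pos] at hx

theorem memLp_markovOp {κ : Kernel X Y} [IsMarkovKernel κ] {μ : Measure X} {h : Y → E}
    {p : ENNReal} (hp : 1 ≤ p) (hh : MemLp h p (κ ∘ₘ μ)) : MemLp (markovOp κ h) p μ :=
  ⟨aestronglyMeasurable_markovOp hh.1, (eLpNorm_markovOp_le hp hh.1).trans_lt hh.2⟩

end MarkovOperator

section Iterate

variable {X : Type*} [MeasurableSpace X] {κ : Kernel X X} {μ π : Measure X}

theorem iterBind_eq_self (hκ : κ.Invariant π) (n : ℕ) : iterBind κ n π = π := by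
  induction n with
  | zero => rfl
  | succ n ih => rw [iterBind, ih, hκ.def]

variable [IsMarkovKernel κ]

theorem isProbabilityMeasure_iterBind [IsProbabilityMeasure μ] (n : ℕ) :
    IsProbabilityMeasure (iterBind κ n μ) := by
  induction n with
  | zero => assumption
  | succ n ih => rw [iterBind]; infer_instance

variable {E : Type*} [NormedAddCommGroup E] [NormedSpace ℝ E]

theorem memLp_iterate_markovOp {p : ENNReal} (hp : 1 ≤ p) {n : ℕ} {h : X → E}
    (hh : MemLp h p (iterBind κ n μ)) : MemLp ((markovOp κ)^[n] h) p μ := by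
  induction n generalizing h with
  | zero => exact hh
  | succ n ih => exact ih (memLp_markovOp hp hh)

theorem integral_iterate_markovOp {n : ℕ} {h : X → E} (hh : Integrable h (iterBind κ n μ)) :
    ∫ x, (markovOp κ)^[n] h x ∂μ = ∫ x, h x ∂(iterBind κ n μ) := by
  induction n generalizing h with
  | zero => rfl
  | succ n ih =>
    have hTh : Integrable (markovOp κ h) (iterBind κ n μ) :=
      memLp_one_iff_integrable.1 (memLp_markovOp le_rfl (memLp_one_iff_integrable.2 hh))
    exact (ih hTh).trans (integral_markovOp hh)

end Iterate

section Contraction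

variable {X : Type*} [MeasurableSpace X] {κ : Kernel X X} [IsMarkovKernel κ] {π : Measure X}

theorem HasAbsSpectralGap.integral_sq_iterate_markovOp_le [IsFiniteMeasure π] {γ : ℝ}
    (hgap : HasAbsSpectralGap κ π γ) (hκ : κ.Invariant π) {h : X → ℝ} (hh : MemLp h 2 π)
    (h_mean : ∫ x, h x ∂π = 0) (n : ℕ) :
    ∫ x, (markovOp κ)^[n] h x ^ 2 ∂π ≤ ((1 - γ) ^ n) ^ 2 * ∫ x, h x ^ 2 ∂π := by
  induction n with
  | zero => simp
  | succ n ih =>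
    have h_iter : MemLp h 2 (iterBind κ n π) := by rwa [iterBind_eq_self hκ]
    have hT : MemLp ((markovOp κ)^[n] h) 2 π := memLp_iterate_markovOp one_le_two h_iter
    have hT_mean : ∫ x, (markovOp κ)^[n] h x ∂π = 0 := by
      have h_int : Integrable h (iterBind κ n π) := by
        rw [iterBind_eq_self hκ]
        exact hh.integrable one_le_two
      rw [integral_iterate_markovOp h_int, iterBind_eq_self hκ, h_mean]
    calc ∫ x, (markovOp κ)^[n + 1] h x ^ 2 ∂π
        = ∫ x, markovOp κ ((markovOp κ)^[n] h) x ^ 2 ∂π := by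
          rw [Function.iterate_succ_apply']
      _ ≤ (1 - γ) ^ 2 * ∫ x, (markovOp κ)^[n] h x ^ 2 ∂π := hgap _ hT hT_mean
      _ ≤ (1 - γ) ^ 2 * (((1 - γ) ^ n) ^ 2 * ∫ x, h x ^ 2 ∂π) := by gcongr
      _ = ((1 - γ) ^ (n + 1)) ^ 2 * ∫ x, h x ^ 2 ∂π := by ring

end Contraction

section Warm

variable {X : Type*} [MeasurableSpace X] {μ π : Measure X} {ω : ℝ}

theorem IsWarm.le_smul (hμ : IsWarm μ π ω) : μ ≤ ENNReal.ofReal ω • π :=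
  Measure.le_iff.2 hμ

theorem IsWarm.memLp (hμ : IsWarm μ π ω) {E : Type*} [NormedAddCommGroup E] {p : ENNReal}
    {h : X → E} (hh : MemLp h p π) : MemLp h p μ :=
  hh.of_measure_le_smul ENNReal.ofReal_ne_top hμ.le_smul

theorem IsWarm.integral_le (hμ : IsWarm μ π ω) (hω : 0 ≤ ω) {h : X → ℝ} (hh : Integrable h π)
    (h_nonneg : 0 ≤ h) : ∫ x, h x ∂μ ≤ ω * ∫ x, h x ∂π :=
  calc ∫ x, h x ∂μ ≤ ∫ x, h x ∂(ENNReal.ofReal ω • π) :=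
        integral_mono_measure hμ.le_smul (.of_forall h_nonneg)
          (hh.smul_measure ENNReal.ofReal_ne_top)
    _ = ω * ∫ x, h x ∂π := by
        rw [integral_smul_measure, ENNReal.toReal_ofReal hω, smul_eq_mul]

theorem IsWarm.one_le [IsProbabilityMeasure μ] [IsProbabilityMeasure π] (hμ : IsWarm μ π ω) :
    1 ≤ ω := by
  simpa using hμ Set.univ MeasurableSet.univ

theorem IsWarm.sq_integral_le [IsProbabilityMeasure μ] (hμ : IsWarm μ π ω) (hω : 0 ≤ ω)
    {h : X → ℝ} (hh : MemLp h 2 π) : (∫ x, h x ∂μ) ^ 2 ≤ ω * ∫ x, h x ^ 2 ∂π :=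
  (sq_integral_le_integral_sq (hμ.memLp hh)).trans
    (hμ.integral_le hω hh.integrable_sq fun x ↦ sq_nonneg (h x))

theorem IsWarm.comp {Y : Type*} [MeasurableSpace Y] (hμ : IsWarm μ π ω) (κ : Kernel X Y) :
    IsWarm (κ ∘ₘ μ) (κ ∘ₘ π) ω := by
  intro A hA
  calc (κ ∘ₘ μ) A = ∫⁻ x, κ x A ∂μ := Measure.bind_apply hA κ.aemeasurable
    _ ≤ ∫⁻ x, κ x A ∂(ENNReal.ofReal ω • π) := lintegral_mono' hμ.le_smul le_rfl
    _ = ENNReal.ofReal ω * (κ ∘ₘ π) A := by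
        rw [lintegral_smul_measure, Measure.bind_apply hA κ.aemeasurable, smul_eq_mul]

theorem isWarm_iterBind (hμ : IsWarm μ π ω) (κ : Kernel X X) (n : ℕ) :
    IsWarm (iterBind κ n μ) (iterBind κ n π) ω := by
  induction n with
  | zero => exact hμ
  | succ n ih => exact ih.comp κ

end Warm

section Mixing

variable {X : Type*} [MeasurableSpace X] {κ : Kernel X X} [IsMarkovKernel κ] {μ π : Measure X}
  [IsProbabilityMeasure μ] [IsProbabilityMeasure π] {γ ω : ℝ}

theorem HasAbsSpectralGap.sq_integral_iterBind_le (hgap : HasAbsSpectralGap κ π γ)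
    (hκ : κ.Invariant π) (hμ : IsWarm μ π ω) {h : X → ℝ} (hh : MemLp h 2 π)
    (h_mean : ∫ x, h x ∂π = 0) (n : ℕ) :
    (∫ x, h x ∂(iterBind κ n μ)) ^ 2 ≤ ω * (((1 - γ) ^ n) ^ 2 * ∫ x, h x ^ 2 ∂π) := by
  have hω : 0 ≤ ω := zero_le_one.trans hμ.one_le
  have h_iter : MemLp h 2 (iterBind κ n π) := by rwa [iterBind_eq_self hκ]
  have := isProbabilityMeasure_iterBind (κ := κ) (μ := μ) n
  have h_int : Integrable h (iterBind κ n μ) :=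
    ((isWarm_iterBind hμ κ n).memLp h_iter).integrable one_le_two
  calc (∫ x, h x ∂(iterBind κ n μ)) ^ 2
      = (∫ x, (markovOp κ)^[n] h x ∂μ) ^ 2 := by rw [integral_iterate_markovOp h_int]
    _ ≤ ω * ∫ x, (markovOp κ)^[n] h x ^ 2 ∂π :=
        hμ.sq_integral_le hω (memLp_iterate_markovOp one_le_two h_iter)
    _ ≤ ω * (((1 - γ) ^ n) ^ 2 * ∫ x, h x ^ 2 ∂π) := by
        gcongr
        exact hgap.integral_sq_iterate_markovOp_le hκ hh h_mean n

theorem HasAbsSpectralGap.sq_integral_iterBind_sub_le (hgap : HasAbsSpectralGap κ π γ)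
    (hκ : κ.Invariant π) (hμ : IsWarm μ π ω) {h : X → ℝ} (hh : MemLp h 2 π) (n : ℕ) :
    (∫ x, h x ∂(iterBind κ n μ) - ∫ x, h x ∂π) ^ 2 ≤ ω * (((1 - γ) ^ n) ^ 2 * Var[h; π]) := by
  have := isProbabilityMeasure_iterBind (κ := κ) (μ := μ) n
  have h_centre (ν : Measure X) [IsProbabilityMeasure ν] (hν : MemLp h 2 ν) :
      ∫ x, (h x - ∫ y, h y ∂π) ∂ν = ∫ x, h x ∂ν - ∫ x, h x ∂π := by
    rw [integral_sub (hν.integrable one_le_two) (integrable_const _), integral_const,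
      probReal_univ, one_smul]
  have h_mean : ∫ x, (h x - ∫ y, h y ∂π) ∂π = 0 := by rw [h_centre π hh, sub_self]
  have h_iter : MemLp h 2 (iterBind κ n π) := by rwa [iterBind_eq_self hκ]
  rw [← h_centre _ ((isWarm_iterBind hμ κ n).memLp h_iter), variance_eq_integral hh.aemeasurable]
  exact hgap.sq_integral_iterBind_le hκ hμ (hh.sub (memLp_const _)) h_mean n

theorem HasAbsSpectralGap.abs_measureReal_iterBind_sub_le (hgap : HasAbsSpectralGap κ π γ)
    (hγ : γ ≤ 1) (hκ : κ.Invariant π) (hμ : IsWarm μ π ω) (n : ℕ) {A : Set X}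
    (hA : MeasurableSet A) :
    |(iterBind κ n μ).real A - π.real A| ≤ √ω * (1 - γ) ^ n / 2 := by
  have hω : 0 ≤ ω := zero_le_one.trans hμ.one_le
  have h_memLp : MemLp (A.indicator (1 : X → ℝ)) 2 π := (memLp_const 1).indicator hA
  have h_sq := hgap.sq_integral_iterBind_sub_le hκ hμ h_memLp n
  rw [integral_indicator_one hA, integral_indicator_one hA] at h_sq
  have h_nonneg : 0 ≤ √ω * (1 - γ) ^ n / 2 :=
    div_nonneg (mul_nonneg (Real.sqrt_nonneg ω) (pow_nonneg (sub_nonneg.2 hγ) n)) zero_le_two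
  refine abs_le_of_sq_le_sq (h_sq.trans ?_) h_nonneg
  calc ω * (((1 - γ) ^ n) ^ 2 * Var[A.indicator 1; π])
      ≤ ω * (((1 - γ) ^ n) ^ 2 * (1 / 2) ^ 2) := by
        gcongr
        exact variance_indicator_one_le hA
    _ = (√ω * (1 - γ) ^ n / 2) ^ 2 := by
        rw [div_pow (√ω * _), mul_pow (√ω), Real.sq_sqrt hω]
        ring

end Mixing

theorem stmt2_general {X : Type*} [MeasurableSpace X] {κ : Kernel X X} [IsMarkovKernel κ]
    {μ π : Measure X} [IsProbabilityMeasure μ] [IsProbabilityMeasure π] {γ ω ξ : ℝ}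
    (hγ : γ ∈ Set.Ioc (0 : ℝ) 1) (hκ : κ.Invariant π) (hgap : HasAbsSpectralGap κ π γ)
    (hμ : IsWarm μ π ω) (hξ : 0 < ξ) {p : ℕ} (hp : Real.log (ω / ξ) / γ ≤ p) {A : Set X}
    (hA : MeasurableSet A) : |(iterBind κ p μ).real A - π.real A| ≤ ξ / 2 := by
  have hω : 1 ≤ ω := hμ.one_le
  have hω_pos : 0 < ω := zero_lt_one.trans_le hω
  have h_pow : (1 - γ) ^ p ≤ ξ / ω :=
    (one_sub_pow_le_inv_of_log_div_le hγ (div_pos hω_pos hξ) hp).trans_eq (inv_div ω ξ)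
  have h_sqrt : √ω ≤ ω := (Real.sqrt_le_left hω_pos.le).2 (le_self_pow₀ hω two_ne_zero)
  calc |(iterBind κ p μ).real A - π.real A| ≤ √ω * (1 - γ) ^ p / 2 :=
        hgap.abs_measureReal_iterBind_sub_le hγ.2 hκ hμ p hA
    _ ≤ ω * (ξ / ω) / 2 := by
        have h_nonneg : 0 ≤ 1 - γ := sub_nonneg.2 hγ.2
        gcongr
    _ = ξ / 2 := by rw [mul_div_cancel₀ ξ hω_pos.ne']

theorem stmt2 {X : Type*} [MeasurableSpace X] (K : X → Measure X) (π μ : Measure X)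
    (hK : ∀ x, IsProbabilityMeasure (K x)) (hKmeas : Measurable K)
    [IsProbabilityMeasure π] [IsProbabilityMeasure μ]
    (γ : ℝ) (hγ : γ ∈ Set.Ioc (0 : ℝ) 1)
    (hrev : Reversible K π) (hgap : HasAbsSpectralGap K π γ)
    (ω : ℝ) (hω : 1 ≤ ω) (hwarm : IsWarm μ π ω)
    (ξ : ℝ) (hξ : 0 < ξ) (hξω : ξ ≤ ω) :
    ∀ p : ℕ, Real.log (ω / ξ) / γ ≤ (p : ℝ) →
      ∀ A : Set X, MeasurableSet A →
        |((iterBind K p μ) A).toReal - (π A).toReal| ≤ ξ := by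
  intro p hp A hA
  have : IsMarkovKernel (⟨K, hKmeas⟩ : Kernel X X) := ⟨hK⟩
  exact (stmt2_general (κ := ⟨K, hKmeas⟩) hγ (Kernel.IsReversible.invariant hrev) hgap hwarm hξ
    hp hA).trans (half_le_self hξ.le)
end

section
/- Let d ≥ 1, α > 0, and let W : ℝ^d → ℝ be a C¹ function such that x ↦ W(x) − (α/2)‖x‖² is convex and exp(−W) is Lebesgue integrable; let π be the probability measure on ℝ^d with density proportional to exp(−W). Let x* ∈ ℝ^d and set m = (∫ x dπ(x)) − x*. Then for every t with 0 ≤ t < α/2, ∫ exp(t‖x − x*‖²) dπ(x) ≤ (1 − 2t/α)^{−d/2} · exp( 2‖m‖²·t / (1 − 2t/α) ). -/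
open MeasureTheory

/-- The probability measure on `ℝ^d` with density proportional to `exp(−W)`. -/
noncomputable def gibbsMeasure (d : ℕ) (W : EuclideanSpace ℝ (Fin d) → ℝ) :
    Measure (EuclideanSpace ℝ (Fin d)) :=
  ((volume.withDensity (fun x => ENNReal.ofReal (Real.exp (-W x)))) Set.univ)⁻¹ •
    volume.withDensity (fun x => ENNReal.ofReal (Real.exp (-W x)))

/-!
By the Prékopa–Leindler inequality, marginals of log-concave functions are log-concave. Completing
the square, `W x - ⟪v, x⟫ + ‖v‖² / (2α)` is jointly convex in `(v, x)` when `W` is `α`-strongly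
convex, so integrating out `x` shows that the log-Laplace transform of `exp (-W)` minus
`‖v‖² / (2α)` is concave in `v`. Its tangent at `v = 0` is governed by the mean, which makes the
measure sub-Gaussian around its mean with variance proxy `1/α` in every direction. Finally,
`exp (t‖y‖²)` is the average of `exp ⟪√(2t) g, y⟫` over a standard Gaussian `g`; exchanging the two
integrals reduces the quadratic exponential moment to these linear ones and a Gaussian integral.
-/

open Module ProbabilityTheory Set
open scoped ENNReal NNReal Pointwise RealInnerProductSpace

section OneDimensional

lemma volume_add_le_volume_add_of_isCompact {K L : Set ℝ} (hK : IsCompact K) (hL : IsCompact L)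
    (hKne : K.Nonempty) (hLne : L.Nonempty) : volume K + volume L ≤ volume (K + L) := by
  obtain ⟨a, haK, ha⟩ := hK.exists_isGreatest hKne
  obtain ⟨b, hbL, hb⟩ := hL.exists_isLeast hLne
  -- The translates `b +ᵥ K` and `a +ᵥ L` lie in `K + L` and meet only at `a + b`.
  have hdisj : AEDisjoint volume (b +ᵥ K) (a +ᵥ L) := by
    refine measure_mono_null (t := {a + b}) ?_ (by simp)
    rintro _ ⟨⟨x, hx, rfl⟩, ⟨y, hy, hxy⟩⟩
    have hxa := ha hx
    have hby := hb hy
    simp only [vadd_eq_add, mem_singleton_iff] at hxy ⊢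
    linarith
  have hsub : (b +ᵥ K) ∪ (a +ᵥ L) ⊆ K + L := by
    rintro _ (⟨x, hx, rfl⟩ | ⟨y, hy, rfl⟩)
    · exact ⟨x, hx, b, hbL, add_comm x b⟩
    · exact ⟨a, haK, y, hy, rfl⟩
  calc volume K + volume L = volume (b +ᵥ K) + volume (a +ᵥ L) := by simp only [measure_vadd]
    _ = volume ((b +ᵥ K) ∪ (a +ᵥ L)) :=
        (measure_union₀ (hL.measurableSet.const_vadd a).nullMeasurableSet hdisj).symm
    _ ≤ volume (K + L) := measure_mono hsub

lemma volume_add_le_volume_add {A B : Set ℝ} (hA : MeasurableSet A) (hB : MeasurableSet B)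
    (hAne : A.Nonempty) (hBne : B.Nonempty) : volume A + volume B ≤ volume (A + B) := by
  obtain ⟨a, ha⟩ := hAne
  obtain ⟨b, hb⟩ := hBne
  rw [hA.measure_eq_iSup_isCompact, hB.measure_eq_iSup_isCompact]
  simp only [iSup_and']
  refine ENNReal.biSup_add_biSup_le' ⟨∅, by simp⟩ ⟨∅, by simp⟩ fun K ⟨hKA, hK⟩ L ⟨hLB, hL⟩ ↦ ?_
  calc volume K + volume L ≤ volume (insert a K) + volume (insert b L) := by
        gcongr <;> exact subset_insert _ _
    _ ≤ volume (insert a K + insert b L) :=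
        volume_add_le_volume_add_of_isCompact (hK.insert a) (hL.insert b)
          (insert_nonempty _ _) (insert_nonempty _ _)
    _ ≤ volume (A + B) := by
        gcongr
        exacts [insert_subset ha hKA, insert_subset hb hLB]

lemma ennreal_geom_mean_le_arith_mean2_weighted {p q : ℝ} (hp : 0 < p) (hq : 0 < q)
    (hpq : p + q = 1) (x y : ℝ≥0∞) :
    x ^ p * y ^ q ≤ ENNReal.ofReal p * x + ENNReal.ofReal q * y := by
  have hconj : p⁻¹.HolderConjugate q⁻¹ :=
    ⟨by simpa using hpq, inv_pos.2 hp, inv_pos.2 hq⟩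
  simpa [ENNReal.rpow_rpow_inv hp.ne', ENNReal.rpow_rpow_inv hq.ne', ENNReal.ofReal_inv_of_pos,
    hp, hq, div_eq_mul_inv, mul_comm] using ENNReal.young_inequality (x ^ p) (y ^ q) hconj

lemma lintegral_eq_lintegral_meas_ofReal_lt {α : Type*} [MeasurableSpace α] (μ : Measure α)
    [SFinite μ] {f : α → ℝ≥0∞} (hf : Measurable f) :
    ∫⁻ x, f x ∂μ = ∫⁻ t in Ioi (0 : ℝ), μ {x | ENNReal.ofReal t < f x} := by
  have hvol (y : ℝ≥0∞) : volume.restrict (Ioi (0 : ℝ)) {t | ENNReal.ofReal t < y} = y := by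
    rw [Measure.restrict_apply (measurableSet_lt (by fun_prop) measurable_const)]
    induction y with
    | top => simp
    | coe y =>
      have : {t : ℝ | ENNReal.ofReal t < y} ∩ Ioi 0 = Ioo 0 (y : ℝ) := by
        ext t
        simp +contextual [ENNReal.ofReal_lt_coe_iff, and_comm, le_of_lt]
      simp [this]
  have hmeas : MeasurableSet {z : α × ℝ | ENNReal.ofReal z.2 < f z.1} :=
    measurableSet_lt (by fun_prop) (by fun_prop)
  calc ∫⁻ x, f x ∂μ
      = ∫⁻ x, volume.restrict (Ioi 0) (Prod.mk x ⁻¹' {z | ENNReal.ofReal z.2 < f z.1}) ∂μ := by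
        simp only [preimage_ofPred_eq, hvol]
    _ = ∫⁻ t in Ioi (0 : ℝ), μ {x | ENNReal.ofReal t < f x} := by
        rw [← Measure.prod_apply hmeas, Measure.prod_apply_symm hmeas]
        rfl

variable {p q : ℝ} {f g h : ℝ → ℝ≥0∞}

lemma volume_superlevel_le (hp : 0 < p) (hq : 0 < q) (hpq : p + q = 1)
    (hf : Measurable f) (hg : Measurable g)
    (hfgh : ∀ x y, f x ^ p * g y ^ q ≤ h (p • x + q • y)) {t : ℝ≥0∞} (ht0 : t ≠ 0)
    (htf : t < ⨆ x, f x) (htg : t < ⨆ x, g x) :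
    ENNReal.ofReal p * volume {x | t < f x} + ENNReal.ofReal q * volume {x | t < g x} ≤
      volume {x | t < h x} := by
  have hsub : p • {x | t < f x} + q • {x | t < g x} ⊆ {x | t < h x} := by
    rintro _ ⟨_, ⟨x, hx, rfl⟩, _, ⟨y, hy, rfl⟩, rfl⟩
    calc t = t ^ p * t ^ q := by
          rw [← ENNReal.rpow_add _ _ ht0 htf.ne_top, hpq, ENNReal.rpow_one]
      _ < f x ^ p * g y ^ q :=
          ENNReal.mul_lt_mul (ENNReal.rpow_lt_rpow hx hp) (ENNReal.rpow_lt_rpow hy hq)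
      _ ≤ h (p • x + q • y) := hfgh x y
  calc ENNReal.ofReal p * volume {x | t < f x} + ENNReal.ofReal q * volume {x | t < g x}
      = volume (p • {x | t < f x}) + volume (q • {x | t < g x}) := by
        simp [abs_of_pos, hp, hq]
    _ ≤ volume (p • {x | t < f x} + q • {x | t < g x}) :=
        volume_add_le_volume_add
          ((measurableSet_lt measurable_const hf).const_smul₀ p)
          ((measurableSet_lt measurable_const hg).const_smul₀ q)
          (Set.Nonempty.smul_set (lt_iSup_iff.1 htf)) (Set.Nonempty.smul_set (lt_iSup_iff.1 htg))
    _ ≤ volume {x | t < h x} := measure_mono hsub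

lemma mul_lintegral_add_mul_lintegral_le (hp : 0 < p) (hq : 0 < q) (hpq : p + q = 1)
    (hf : Measurable f) (hg : Measurable g) (hh : Measurable h)
    (hfgh : ∀ x y, f x ^ p * g y ^ q ≤ h (p • x + q • y)) (hsup : ⨆ x, f x = ⨆ x, g x) :
    ENNReal.ofReal p * (∫⁻ x, f x) + ENNReal.ofReal q * (∫⁻ x, g x) ≤ ∫⁻ x, h x := by
  have hmeas : Measurable fun t : ℝ ↦ volume {x | ENNReal.ofReal t < f x} :=
    Antitone.measurable fun s t hst ↦
      measure_mono fun x hx ↦ (ENNReal.ofReal_le_ofReal hst).trans_lt hx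
  simp only [lintegral_eq_lintegral_meas_ofReal_lt volume, hf, hg, hh]
  rw [← lintegral_const_mul' _ _ ENNReal.ofReal_ne_top,
    ← lintegral_const_mul' _ _ ENNReal.ofReal_ne_top, ← lintegral_add_left (hmeas.const_mul _)]
  refine setLIntegral_mono' measurableSet_Ioi fun t ht ↦ ?_
  -- Since the suprema agree, the two superlevel sets at height `t` are empty or nonempty together.
  rcases lt_or_ge (ENNReal.ofReal t) (⨆ x, f x) with htf | htf
  · exact volume_superlevel_le hp hq hpq hf hg hfgh (by simpa using ht) htf (hsup ▸ htf)
  · have hf_empty : {x | ENNReal.ofReal t < f x} = ∅ :=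
      eq_empty_of_forall_notMem fun x ↦ ((le_iSup f x).trans htf).not_gt
    have hg_empty : {x | ENNReal.ofReal t < g x} = ∅ :=
      eq_empty_of_forall_notMem fun x ↦ ((le_iSup g x).trans (hsup ▸ htf)).not_gt
    simp [hf_empty, hg_empty]

lemma rpow_lintegral_mul_rpow_lintegral_le_of_iSup_ne_top (hp : 0 < p) (hq : 0 < q)
    (hpq : p + q = 1) (hf : Measurable f) (hg : Measurable g) (hh : Measurable h)
    (hfgh : ∀ x y, f x ^ p * g y ^ q ≤ h (p • x + q • y)) (hf_sup : ⨆ x, f x ≠ ∞)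
    (hg_sup : ⨆ x, g x ≠ ∞) : (∫⁻ x, f x) ^ p * (∫⁻ x, g x) ^ q ≤ ∫⁻ x, h x := by
  set a := ⨆ x, f x with ha
  set b := ⨆ x, g x with hb
  rcases eq_or_ne a 0 with ha0 | ha0
  · simp [ENNReal.iSup_eq_zero.1 (ha.symm.trans ha0), hp]
  rcases eq_or_ne b 0 with hb0 | hb0
  · simp [ENNReal.iSup_eq_zero.1 (hb.symm.trans hb0), hq]
  set c := a ^ p * b ^ q
  have hc0 : c ≠ 0 := mul_ne_zero (by simp [ha0, hf_sup]) (by simp [hb0, hg_sup])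
  have hc_top : c ≠ ∞ := by finiteness
  have hscale (u v : ℝ≥0∞) : (a⁻¹ * u) ^ p * (b⁻¹ * v) ^ q = c⁻¹ * (u ^ p * v ^ q) := by
    rw [ENNReal.mul_rpow_of_nonneg _ _ hp.le, ENNReal.mul_rpow_of_nonneg _ _ hq.le,
      ENNReal.inv_rpow, ENNReal.inv_rpow, mul_mul_mul_comm,
      ENNReal.mul_inv (by simp [ha0, hf_sup]) (by simp [hb0, hg_sup])]
  have hsup : ⨆ x, a⁻¹ * f x = ⨆ x, b⁻¹ * g x := by
    rw [← ENNReal.mul_iSup, ← ENNReal.mul_iSup, ← ha, ← hb, ENNReal.inv_mul_cancel ha0 hf_sup,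
      ENNReal.inv_mul_cancel hb0 hg_sup]
  have hnormalized := mul_lintegral_add_mul_lintegral_le hp hq hpq (hf.const_mul a⁻¹)
    (hg.const_mul b⁻¹) (hh.const_mul c⁻¹)
    (fun x y ↦ (hscale _ _).trans_le (mul_le_mul_right (hfgh x y) _)) hsup
  have := (ennreal_geom_mean_le_arith_mean2_weighted hp hq hpq _ _).trans hnormalized
  rwa [lintegral_const_mul _ hf, lintegral_const_mul _ hg, lintegral_const_mul _ hh, hscale,
    ENNReal.mul_le_mul_iff_right (ENNReal.inv_ne_zero.2 hc_top) (ENNReal.inv_ne_top.2 hc0)] at this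

end OneDimensional

section ProductsAndMaps

variable {E F : Type*} [AddCommMonoid E] [Module ℝ E] [MeasurableSpace E]
  [AddCommMonoid F] [Module ℝ F] [MeasurableSpace F]

/-- A measure on a real vector space satisfies the Prékopa–Leindler inequality if
`(∫ f)^p (∫ g)^q ≤ ∫ h` whenever `f(x)^p g(y)^q ≤ h(p x + q y)` for all `x, y`, for all weights
`p, q > 0` with `p + q = 1`. As a predicate on measures it can be transported along products and
linear maps. -/
def PrekopaLeindler (μ : Measure E) : Prop :=
  ∀ ⦃p q : ℝ⦄, 0 < p → 0 < q → p + q = 1 →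
    ∀ ⦃f g h : E → ℝ≥0∞⦄, Measurable f → Measurable g → Measurable h →
      (∀ x y, f x ^ p * g y ^ q ≤ h (p • x + q • y)) →
        (∫⁻ x, f x ∂μ) ^ p * (∫⁻ x, g x ∂μ) ^ q ≤ ∫⁻ x, h x ∂μ

lemma tendsto_lintegral_min_natCast {α : Type*} [MeasurableSpace α] (μ : Measure α)
    {f : α → ℝ≥0∞} (hf : Measurable f) :
    Filter.Tendsto (fun n : ℕ ↦ ∫⁻ x, min (f x) n ∂μ) Filter.atTop (nhds (∫⁻ x, f x ∂μ)) := by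
  refine lintegral_tendsto_of_tendsto_of_monotone (fun n ↦ by fun_prop)
    (.of_forall fun x m n hmn ↦ ?_) (.of_forall fun x ↦ ?_)
  · dsimp only
    gcongr
  · simpa using (tendsto_const_nhds (x := f x)).min ENNReal.tendsto_nat_nhds_top

theorem prekopaLeindler_volume_real : PrekopaLeindler (volume : Measure ℝ) := by
  intro p q hp hq hpq f g h hf hg hh hfgh
  rcases eq_or_ne (∫⁻ x, f x) 0 with hf0 | hf0
  · simp [hf0, hp]
  rcases eq_or_ne (∫⁻ x, g x) 0 with hg0 | hg0
  · simp [hg0, hq]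
  have hmin_sup (f : ℝ → ℝ≥0∞) (n : ℕ) : ⨆ x, min (f x) n ≠ ∞ :=
    ne_top_of_le_ne_top (ENNReal.natCast_ne_top n) (iSup_le fun x ↦ min_le_right _ _)
  have htrunc (n : ℕ) : (∫⁻ x, min (f x) n) ^ p * (∫⁻ x, min (g x) n) ^ q ≤ ∫⁻ x, h x :=
    rpow_lintegral_mul_rpow_lintegral_le_of_iSup_ne_top hp hq hpq (by fun_prop) (by fun_prop) hh
      (fun x y ↦ le_trans (by gcongr <;> exact min_le_left _ _) (hfgh x y)) (hmin_sup f n)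
      (hmin_sup g n)
  exact le_of_tendsto
    (ENNReal.Tendsto.mul ((tendsto_lintegral_min_natCast _ hf).ennrpow_const p)
      (.inl (by simp [hf0, hp.le])) ((tendsto_lintegral_min_natCast _ hg).ennrpow_const q)
      (.inl (by simp [hg0, hq.le]))) (.of_forall htrunc)

lemma prekopaLeindler_dirac_zero : PrekopaLeindler (Measure.dirac (0 : E)) := by
  intro p q _ _ _ f g h hf hg hh hfgh
  simpa [lintegral_dirac' _ hf, lintegral_dirac' _ hg, lintegral_dirac' _ hh] using hfgh 0 0

namespace PrekopaLeindler

variable {μ : Measure E} {ν : Measure F}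

lemma prod [SFinite ν] (hμ : PrekopaLeindler μ) (hν : PrekopaLeindler ν) :
    PrekopaLeindler (μ.prod ν) := by
  intro p q hp hq hpq f g h hf hg hh hfgh
  rw [lintegral_prod _ hf.aemeasurable, lintegral_prod _ hg.aemeasurable,
    lintegral_prod _ hh.aemeasurable]
  exact hμ hp hq hpq hf.lintegral_prod_right' hg.lintegral_prod_right' hh.lintegral_prod_right'
    fun x y ↦ hν hp hq hpq (by fun_prop) (by fun_prop) (by fun_prop) fun u v ↦ hfgh (x, u) (y, v)

lemma map (hμ : PrekopaLeindler μ) (L : E →ₗ[ℝ] F) (hL : Measurable L) :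
    PrekopaLeindler (μ.map L) := by
  intro p q hp hq hpq f g h hf hg hh hfgh
  rw [lintegral_map hf hL, lintegral_map hg hL, lintegral_map hh hL]
  exact hμ hp hq hpq (hf.comp hL) (hg.comp hL) (hh.comp hL) fun x y ↦ by
    simpa only [map_add, map_smul] using hfgh (L x) (L y)

lemma smul (hμ : PrekopaLeindler μ) (c : ℝ≥0∞) : PrekopaLeindler (c • μ) := by
  intro p q hp hq hpq f g h hf hg hh hfgh
  have hc : c ^ p * c ^ q = c := by
    rw [← ENNReal.rpow_add_of_nonneg _ _ hp.le hq.le, hpq, ENNReal.rpow_one]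
  simp only [lintegral_smul_measure, smul_eq_mul]
  rw [ENNReal.mul_rpow_of_nonneg _ _ hp.le, ENNReal.mul_rpow_of_nonneg _ _ hq.le,
    mul_mul_mul_comm, hc]
  exact mul_le_mul_right (hμ hp hq hpq hf hg hh hfgh) c

end PrekopaLeindler

end ProductsAndMaps

lemma prekopaLeindler_volume_pi (n : ℕ) : PrekopaLeindler (volume : Measure (Fin n → ℝ)) := by
  induction n with
  | zero =>
    rw [volume_pi, Measure.pi_of_empty _ 0]
    exact prekopaLeindler_dirac_zero
  | succ n ih =>
    let L := (Fin.consLinearEquiv ℝ fun _ : Fin (n + 1) ↦ ℝ).toLinearMap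
    have hL : ⇑L = (MeasurableEquiv.piFinSuccAbove (fun _ : Fin (n + 1) ↦ ℝ) 0).symm := by
      ext z i
      refine Fin.cases ?_ (fun i ↦ ?_) i <;> simp [L]
    have hvol := (volume_preserving_piFinSuccAbove (fun _ : Fin (n + 1) ↦ ℝ) 0).symm
    rw [← hL] at hvol
    rw [← hvol.map_eq]
    exact (prekopaLeindler_volume_real.prod ih).map L hvol.measurable

theorem prekopaLeindler_of_isAddHaarMeasure {E : Type*} [NormedAddCommGroup E] [NormedSpace ℝ E]
    [FiniteDimensional ℝ E] [MeasurableSpace E] [BorelSpace E] (μ : Measure E)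
    [μ.IsAddHaarMeasure] : PrekopaLeindler μ := by
  let L := (ContinuousLinearEquiv.ofFinrankEq (𝕜 := ℝ) (E := Fin (finrank ℝ E) → ℝ) (F := E)
    (by simp))
  rw [Measure.isAddLeftInvariant_eq_smul μ ((volume : Measure (Fin (finrank ℝ E) → ℝ)).map L)]
  exact ((prekopaLeindler_volume_pi _).map L.toLinearMap L.continuous.measurable).smul _

theorem concaveOn_log_integral_exp_neg {V E : Type*} [AddCommMonoid V] [Module ℝ V]
    [AddCommMonoid E] [Module ℝ E] [MeasurableSpace E] {μ : Measure E} [NeZero μ]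
    (hμ : PrekopaLeindler μ) {F : V × E → ℝ} (hF : ConvexOn ℝ univ F)
    (hF_meas : ∀ v, Measurable fun x ↦ F (v, x))
    (hF_int : ∀ v, Integrable (fun x ↦ Real.exp (-F (v, x))) μ) :
    ConcaveOn ℝ univ fun v ↦ Real.log (∫ x, Real.exp (-F (v, x)) ∂μ) := by
  have hpos (v : V) : 0 < ∫ x, Real.exp (-F (v, x)) ∂μ := integral_exp_pos (hF_int v)
  refine concaveOn_iff_forall_pos.2 ⟨convex_univ, fun u _ v _ p q hp hq hpq ↦ ?_⟩
  have hpointwise (x y : E) :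
      ENNReal.ofReal (Real.exp (-F (u, x))) ^ p * ENNReal.ofReal (Real.exp (-F (v, y))) ^ q ≤
        ENNReal.ofReal (Real.exp (-F (p • u + q • v, p • x + q • y))) := by
    rw [ENNReal.ofReal_rpow_of_pos (Real.exp_pos _), ENNReal.ofReal_rpow_of_pos (Real.exp_pos _),
      ← ENNReal.ofReal_mul (by positivity), ← Real.exp_mul, ← Real.exp_mul, ← Real.exp_add]
    have := hF.2 (mem_univ (u, x)) (mem_univ (v, y)) hp.le hq.le hpq
    simp only [Prod.smul_mk, Prod.mk_add_mk, smul_eq_mul] at this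
    gcongr
    linarith
  have hmeas (v : V) : Measurable fun x ↦ ENNReal.ofReal (Real.exp (-F (v, x))) :=
    (hF_meas v).neg.exp.ennreal_ofReal
  have hlintegral (v : V) : ∫⁻ x, ENNReal.ofReal (Real.exp (-F (v, x))) ∂μ =
      ENNReal.ofReal (∫ x, Real.exp (-F (v, x)) ∂μ) :=
    (ofReal_integral_eq_lintegral_ofReal (hF_int v) (.of_forall fun _ ↦ by positivity)).symm
  have hPL := hμ hp hq hpq (hmeas u) (hmeas v) (hmeas _) hpointwise
  rw [hlintegral, hlintegral, hlintegral, ENNReal.ofReal_rpow_of_pos (hpos u),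
    ENNReal.ofReal_rpow_of_pos (hpos v), ← ENNReal.ofReal_mul (Real.rpow_nonneg (hpos u).le p),
    ENNReal.ofReal_le_ofReal_iff (hpos _).le] at hPL
  calc p • Real.log (∫ x, Real.exp (-F (u, x)) ∂μ) + q • Real.log (∫ x, Real.exp (-F (v, x)) ∂μ)
      = Real.log ((∫ x, Real.exp (-F (u, x)) ∂μ) ^ p * (∫ x, Real.exp (-F (v, x)) ∂μ) ^ q) := by
        rw [Real.log_mul (Real.rpow_pos_of_pos (hpos u) p).ne'
          (Real.rpow_pos_of_pos (hpos v) q).ne', Real.log_rpow (hpos u), Real.log_rpow (hpos v),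
          smul_eq_mul, smul_eq_mul]
    _ ≤ Real.log (∫ x, Real.exp (-F (p • u + q • v, x)) ∂μ) :=
        Real.log_le_log (mul_pos (Real.rpow_pos_of_pos (hpos u) p)
          (Real.rpow_pos_of_pos (hpos v) q)) hPL

section Gaussian

variable {E : Type*} [NormedAddCommGroup E] [InnerProductSpace ℝ E] [FiniteDimensional ℝ E]
  [MeasurableSpace E] [BorelSpace E] {b : ℝ}

lemma integrable_exp_neg_mul_sq_norm_add_inner (hb : 0 < b) (w : E) :
    Integrable fun v : E ↦ Real.exp (-b * ‖v‖ ^ 2 + ⟪w, v⟫) := by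
  have := (GaussianFourier.integrable_cexp_neg_mul_sq_norm_add (b := b) (by simpa) 1 w).re
  convert! this with v
  rw [← Complex.ofReal_re (Real.exp _)]
  simp

lemma integral_exp_neg_mul_sq_norm_add_inner (hb : 0 < b) (w : E) :
    ∫ v : E, Real.exp (-b * ‖v‖ ^ 2 + ⟪w, v⟫) =
      (Real.pi / b) ^ (finrank ℝ E / 2 : ℝ) * Real.exp (‖w‖ ^ 2 / (4 * b)) := by
  have := GaussianFourier.integral_cexp_neg_mul_sq_norm_add (b := b) (by simpa) 1 w
  apply Complex.ofReal_injective
  rw [← integral_complex_ofReal]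
  convert this using 1
  · simp
  · rw [Complex.ofReal_mul, Complex.ofReal_cpow (by positivity)]
    simp

lemma lintegral_exp_neg_mul_sq_norm_mul_exp_inner (hb : 0 < b) (s : ℝ) (y : E) :
    ∫⁻ g : E, ENNReal.ofReal (Real.exp (-b * ‖g‖ ^ 2)) * ENNReal.ofReal (Real.exp ⟪s • g, y⟫) =
      ENNReal.ofReal ((Real.pi / b) ^ (finrank ℝ E / 2 : ℝ) *
        Real.exp (s ^ 2 * ‖y‖ ^ 2 / (4 * b))) := by
  have hcombine (g : E) : Real.exp (-b * ‖g‖ ^ 2) * Real.exp ⟪s • g, y⟫ =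
      Real.exp (-b * ‖g‖ ^ 2 + ⟪s • y, g⟫) := by
    rw [Real.exp_add, real_inner_smul_left, real_inner_smul_left, real_inner_comm]
  simp only [← ENNReal.ofReal_mul (Real.exp_pos _).le, hcombine]
  rw [← ofReal_integral_eq_lintegral_ofReal (integrable_exp_neg_mul_sq_norm_add_inner hb _)
      (.of_forall fun _ ↦ by positivity), integral_exp_neg_mul_sq_norm_add_inner hb, norm_smul,
    mul_pow, Real.norm_eq_abs, sq_abs]

end Gaussian

lemma le_tangent_of_concaveOn {f : ℝ → ℝ} {f' x : ℝ} (hf : ConcaveOn ℝ univ f)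
    (hf' : HasDerivAt f f' x) (y : ℝ) : f y ≤ f x + (y - x) * f' := by
  rcases lt_trichotomy x y with hxy | rfl | hxy
  · have := hf.slope_le_of_hasDerivAt (mem_univ x) (mem_univ y) hxy hf'
    rw [slope_def_field, div_le_iff₀ (sub_pos.2 hxy)] at this
    linarith
  · simp
  · have := hf.le_slope_of_hasDerivAt (mem_univ y) (mem_univ x) hxy hf'
    rw [slope_def_field, le_div_iff₀ (sub_pos.2 hxy)] at this
    linarith

lemma hasSubgaussianMGF_sub_integral_of_concaveOn {Ω : Type*} [MeasurableSpace Ω] {μ : Measure Ω}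
    [IsProbabilityMeasure μ] {X : Ω → ℝ} {c : ℝ≥0}
    (hX : ∀ t, Integrable (fun ω ↦ Real.exp (t * X ω)) μ)
    (hconc : ConcaveOn ℝ univ fun t ↦ cgf X μ t - c * t ^ 2 / 2) :
    HasSubgaussianMGF (fun ω ↦ X ω - μ[X]) c μ where
  integrable_exp_mul t := by
    simpa only [mul_sub, Real.exp_sub] using (hX t).div_const _
  mgf_le t := by
    have h0 : (0 : ℝ) ∈ interior (integrableExpSet X μ) := by
      simp [eq_univ_of_forall (s := integrableExpSet X μ) hX]
    have hcgf : HasDerivAt (cgf X μ) μ[X] 0 := by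
      simpa [deriv_cgf_zero h0] using (analyticAt_cgf h0).differentiableAt.hasDerivAt
    have hsq : HasDerivAt (fun t : ℝ ↦ c * t ^ 2 / 2) 0 0 := by
      simpa using ((hasDerivAt_pow 2 (0 : ℝ)).const_mul (c : ℝ)).div_const 2
    have htangent := le_tangent_of_concaveOn hconc (hcgf.sub hsq) t
    simp only [cgf_zero] at htangent
    calc mgf (fun ω ↦ X ω - μ[X]) μ t
        = Real.exp (cgf X μ t - t * μ[X]) := by
          simp only [sub_eq_add_neg, mgf_add_const, Real.exp_add, exp_cgf (hX t), mul_neg]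
      _ ≤ Real.exp (c * t ^ 2 / 2) := by
          gcongr
          linarith

section StronglyConvex

variable {E : Type*} [NormedAddCommGroup E] [InnerProductSpace ℝ E] {α : ℝ} {W : E → ℝ}

lemma strongConvexOn_sub_inner (hW : StrongConvexOn univ α W) (v : E) :
    StrongConvexOn univ α fun x ↦ W x - ⟪v, x⟫ := by
  rw [strongConvexOn_iff_convex] at hW ⊢
  convert! hW.sub ((innerₗ E v).concaveOn convex_univ) using 2 with x
  simp only [Pi.sub_apply, innerₗ_apply_apply]
  ring

lemma convexOn_sub_inner_add (hα : 0 < α) (hW : StrongConvexOn univ α W) :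
    ConvexOn ℝ univ fun z : E × E ↦ W z.2 - ⟪z.1, z.2⟫ + α⁻¹ / 2 * ‖z.1‖ ^ 2 := by
  have hquad : ConvexOn ℝ univ fun z : E × E ↦ α / 2 * ‖z.2 - α⁻¹ • z.1‖ ^ 2 := by
    have hsq : ConvexOn ℝ univ fun x : E ↦ ‖x‖ ^ 2 :=
      convexOn_univ_norm.pow (fun _ _ ↦ norm_nonneg _) 2
    exact (hsq.comp_linearMap
      (LinearMap.snd ℝ E E - α⁻¹ • LinearMap.fst ℝ E E)).smul (by positivity)
  convert! ((strongConvexOn_iff_convex.1 hW).comp_linearMap (.snd ℝ E E)).add hquad using 2 with z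
  simp only [LinearMap.coe_snd, norm_sub_sq_real, inner_smul_right, real_inner_comm, norm_smul,
    norm_inv, Real.norm_eq_abs, abs_of_pos hα, Pi.add_apply, Function.comp_apply]
  field_simp
  ring

variable [FiniteDimensional ℝ E]

lemma integrable_of_forall_integrable_inner {Ω : Type*} [MeasurableSpace Ω] {μ : Measure Ω}
    {X : Ω → E} (hX : ∀ v, Integrable (fun ω ↦ ⟪v, X ω⟫) μ) : Integrable X μ := by
  simpa only [OrthonormalBasis.sum_repr'] using
    integrable_finsetSum Finset.univ fun i _ ↦
      (hX (stdOrthonormalBasis ℝ E i)).smul_const (stdOrthonormalBasis ℝ E i)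

lemma exists_inner_add_le_of_convexOn {f : E → ℝ} (hf : ConvexOn ℝ univ f) :
    ∃ (w : E) (b : ℝ), ∀ x, ⟪w, x⟫ + b ≤ f x := by
  obtain ⟨l, b, hlb, -⟩ := hf.exists_affine_le_of_lt (𝕜 := ℝ) (mem_univ 0) (sub_one_lt (f 0))
    isClosed_univ (hf.continuousOn isOpen_univ).lowerSemicontinuousOn
  refine ⟨(InnerProductSpace.toDual ℝ E).symm l, b, fun x ↦ ?_⟩
  simpa using hlb ⟨x, mem_univ x⟩

lemma continuous_of_strongConvexOn (hW : StrongConvexOn univ α W) : Continuous W := by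
  have := (strongConvexOn_iff_convex.1 hW).continuousOn isOpen_univ
  rw [continuousOn_univ] at this
  convert! this.add (by fun_prop : Continuous fun x : E ↦ α / 2 * ‖x‖ ^ 2) using 1
  ext x
  simp

variable [MeasurableSpace E] [BorelSpace E]

lemma integrable_exp_neg_of_strongConvexOn (hα : 0 < α) (hW : StrongConvexOn univ α W) :
    Integrable fun x ↦ Real.exp (-W x) := by
  obtain ⟨w, b, hwb⟩ := exists_inner_add_le_of_convexOn (strongConvexOn_iff_convex.1 hW)
  refine ((integrable_exp_neg_mul_sq_norm_add_inner (half_pos hα) (-w)).mul_const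
    (Real.exp (-b))).mono' (continuous_of_strongConvexOn hW).neg.rexp.aestronglyMeasurable
    (.of_forall fun x ↦ ?_)
  rw [Real.norm_of_nonneg (Real.exp_pos _).le, ← Real.exp_add, inner_neg_left]
  gcongr
  linarith [hwb x]

lemma integrable_exp_inner_tilted (hα : 0 < α) (hW : StrongConvexOn univ α W) (v : E) :
    Integrable (fun x ↦ Real.exp ⟪v, x⟫) (volume.tilted fun x ↦ -W x) := by
  rw [integrable_tilted_iff (integrable_exp_neg_of_strongConvexOn hα hW)]
  convert! integrable_exp_neg_of_strongConvexOn hα (strongConvexOn_sub_inner hW v) using 2 with x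
  rw [smul_eq_mul, ← Real.exp_add]
  ring_nf

lemma concaveOn_log_integral_exp_inner_tilted_sub (hα : 0 < α) (hW : StrongConvexOn univ α W) :
    ConcaveOn ℝ univ fun v : E ↦
      Real.log (∫ x, Real.exp ⟪v, x⟫ ∂volume.tilted fun x ↦ -W x) - α⁻¹ / 2 * ‖v‖ ^ 2 := by
  have hsplit (v x : E) : Real.exp (-(W x - ⟪v, x⟫ + α⁻¹ / 2 * ‖v‖ ^ 2)) =
      Real.exp (-(W x - ⟪v, x⟫)) * Real.exp (-(α⁻¹ / 2 * ‖v‖ ^ 2)) := by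
    rw [← Real.exp_add]
    ring_nf
  have hint (v : E) := integrable_exp_neg_of_strongConvexOn hα (strongConvexOn_sub_inner hW v)
  have hcont := continuous_of_strongConvexOn hW
  have hprekopa := concaveOn_log_integral_exp_neg (prekopaLeindler_of_isAddHaarMeasure volume)
    (convexOn_sub_inner_add hα hW) (fun v ↦ by fun_prop)
    (fun v ↦ by simpa only [hsplit] using (hint v).mul_const _)
  convert! hprekopa.sub
    (convexOn_const (Real.log (∫ x, Real.exp (-W x))) convex_univ) using 2 with v
  have hlaplace : ∫ x, Real.exp ⟪v, x⟫ ∂volume.tilted (fun x ↦ -W x) =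
      (∫ x, Real.exp (-(W x - ⟪v, x⟫))) / ∫ x, Real.exp (-W x) := by
    rw [integral_exp_tilted]
    simp only [Pi.add_apply, neg_sub', sub_neg_eq_add]
  have hpos := integral_exp_pos (hint v)
  have hW_pos := integral_exp_pos (integrable_exp_neg_of_strongConvexOn hα hW)
  simp only [Pi.sub_apply, hsplit, integral_mul_const]
  rw [hlaplace, Real.log_div hpos.ne' hW_pos.ne', Real.log_mul hpos.ne' (Real.exp_pos _).ne',
    Real.log_exp]
  ring

theorem hasSubgaussianMGF_inner_sub_integral_tilted (hα : 0 < α) (hW : StrongConvexOn univ α W)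
    (v : E) :
    HasSubgaussianMGF (fun x ↦ ⟪v, x - ∫ y, y ∂volume.tilted fun y ↦ -W y⟫)
      (α.toNNReal⁻¹ * ‖v‖₊ ^ 2) (volume.tilted fun x ↦ -W x) := by
  set π := volume.tilted fun x ↦ -W x
  have : IsProbabilityMeasure π :=
    isProbabilityMeasure_tilted (integrable_exp_neg_of_strongConvexOn hα hW)
  have hexp (v : E) (t : ℝ) : Integrable (fun x ↦ Real.exp (t * ⟪v, x⟫)) π := by
    simpa only [real_inner_smul_left] using integrable_exp_inner_tilted hα hW (t • v)
  have hinner (v : E) : Integrable (fun x ↦ ⟪v, x⟫) π :=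
    integrable_of_mem_interior_integrableExpSet <| by
      simp [eq_univ_of_forall (s := integrableExpSet (fun x ↦ ⟪v, x⟫) π) (hexp v)]
  have hmean : ∫ x, ⟪v, x⟫ ∂π = ⟪v, ∫ x, x ∂π⟫ :=
    integral_inner (integrable_of_forall_integrable_inner hinner) v
  have hconc : ConcaveOn ℝ univ fun t ↦ cgf (fun x ↦ ⟪v, x⟫) π t -
      (α.toNNReal⁻¹ * ‖v‖₊ ^ 2 : ℝ≥0) * t ^ 2 / 2 := by
    convert! (concaveOn_log_integral_exp_inner_tilted_sub hα hW).comp_linearMap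
      (LinearMap.toSpanSingleton ℝ E v) using 2 with t
    simp only [cgf, mgf, NNReal.coe_mul, NNReal.coe_inv, Real.coe_toNNReal', hα.le, sup_of_le_left,
      NNReal.coe_pow, coe_nnnorm, Function.comp_apply, LinearMap.toSpanSingleton_apply,
      real_inner_smul_left, norm_smul, Real.norm_eq_abs, mul_pow, sq_abs, sub_right_inj, π]
    ring
  simpa only [inner_sub_right, hmean] using
    hasSubgaussianMGF_sub_integral_of_concaveOn (hexp v) hconc

end StronglyConvex

section Linearization

variable {E : Type*} [NormedAddCommGroup E] [InnerProductSpace ℝ E] [MeasurableSpace E]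

lemma lintegral_exp_inner_sub_le {μ : Measure E} {c : ℝ≥0} {m : E}
    (hμ : ∀ v, HasSubgaussianMGF (fun x ↦ ⟪v, x - m⟫) (c * ‖v‖₊ ^ 2) μ) (a v : E) :
    ∫⁻ x, ENNReal.ofReal (Real.exp ⟪v, x - a⟫) ∂μ ≤
      ENNReal.ofReal (Real.exp (c * ‖v‖ ^ 2 / 2)) * ENNReal.ofReal (Real.exp ⟪v, m - a⟫) := by
  have hint : Integrable (fun x ↦ Real.exp ⟪v, x - m⟫) μ := by
    simpa using (hμ v).integrable_exp_mul 1
  have hmgf : ∫ x, Real.exp ⟪v, x - m⟫ ∂μ ≤ Real.exp (c * ‖v‖ ^ 2 / 2) := by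
    simpa [mgf] using (hμ v).mgf_le 1
  calc ∫⁻ x, ENNReal.ofReal (Real.exp ⟪v, x - a⟫) ∂μ
      = ∫⁻ x, ENNReal.ofReal (Real.exp ⟪v, x - m⟫) *
          ENNReal.ofReal (Real.exp ⟪v, m - a⟫) ∂μ := by
        congr with x
        rw [← ENNReal.ofReal_mul (Real.exp_pos _).le, ← Real.exp_add, ← inner_add_right,
          sub_add_sub_cancel]
    _ = ENNReal.ofReal (∫ x, Real.exp ⟪v, x - m⟫ ∂μ) * ENNReal.ofReal (Real.exp ⟪v, m - a⟫) := by
        rw [lintegral_mul_const' _ _ ENNReal.ofReal_ne_top,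
          ofReal_integral_eq_lintegral_ofReal hint (.of_forall fun _ ↦ by positivity)]
    _ ≤ ENNReal.ofReal (Real.exp (c * ‖v‖ ^ 2 / 2)) * ENNReal.ofReal (Real.exp ⟪v, m - a⟫) := by
        gcongr

lemma exp_neg_mul_lintegral_exp_inner_smul_sub_le {μ : Measure E} {c : ℝ≥0} {m : E}
    (hμ : ∀ v, HasSubgaussianMGF (fun x ↦ ⟪v, x - m⟫) (c * ‖v‖₊ ^ 2) μ) (a : E) (s : ℝ) (g : E) :
    ENNReal.ofReal (Real.exp (-(1 / 2) * ‖g‖ ^ 2)) *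
        ∫⁻ x, ENNReal.ofReal (Real.exp ⟪s • g, x - a⟫) ∂μ ≤
      ENNReal.ofReal (Real.exp (-((1 - s ^ 2 * c) / 2) * ‖g‖ ^ 2)) *
        ENNReal.ofReal (Real.exp ⟪s • g, m - a⟫) := by
  have hexp : -((1 - s ^ 2 * c) / 2) * ‖g‖ ^ 2 =
      -(1 / 2) * ‖g‖ ^ 2 + c * ‖s • g‖ ^ 2 / 2 := by
    rw [norm_smul, mul_pow, Real.norm_eq_abs, sq_abs]
    ring
  rw [hexp, Real.exp_add, ENNReal.ofReal_mul (Real.exp_pos _).le, mul_assoc]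
  gcongr
  exact lintegral_exp_inner_sub_le hμ a (s • g)

variable [FiniteDimensional ℝ E] [BorelSpace E]

lemma ofReal_exp_mul_sq_norm_eq_lintegral {t : ℝ} (ht : 0 ≤ t) (y : E) :
    ENNReal.ofReal (Real.exp (t * ‖y‖ ^ 2)) =
      ENNReal.ofReal ((2 * Real.pi) ^ (-(finrank ℝ E : ℝ) / 2)) *
        ∫⁻ g : E, ENNReal.ofReal (Real.exp (-(1 / 2) * ‖g‖ ^ 2)) *
          ENNReal.ofReal (Real.exp ⟪√(2 * t) • g, y⟫) := by
  rw [lintegral_exp_neg_mul_sq_norm_mul_exp_inner one_half_pos,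
    ← ENNReal.ofReal_mul (by positivity), Real.sq_sqrt (by positivity), ← mul_assoc, neg_div,
    Real.rpow_neg (by positivity), div_div_eq_mul_div, div_one,
    mul_comm Real.pi, inv_mul_cancel₀ (by positivity)]
  ring_nf

theorem lintegral_exp_mul_sq_norm_sub_le {μ : Measure E} [SFinite μ] {c : ℝ≥0} {m : E}
    (hμ : ∀ v, HasSubgaussianMGF (fun x ↦ ⟪v, x - m⟫) (c * ‖v‖₊ ^ 2) μ) (a : E) {t : ℝ}
    (ht : 0 ≤ t) (htc : 2 * t * c < 1) :
    ∫⁻ x, ENNReal.ofReal (Real.exp (t * ‖x - a‖ ^ 2)) ∂μ ≤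
      ENNReal.ofReal ((1 - 2 * t * c) ^ (-(finrank ℝ E : ℝ) / 2) *
        Real.exp (‖m - a‖ ^ 2 * t / (1 - 2 * t * c))) := by
  set r := 1 - 2 * t * c
  have hr_pos : 0 < r := sub_pos.2 htc
  set κ := (2 * Real.pi) ^ (-(finrank ℝ E : ℝ) / 2) with hκ
  set s := √(2 * t)
  have hs_sq : s ^ 2 = 2 * t := Real.sq_sqrt (by positivity)
  calc ∫⁻ x, ENNReal.ofReal (Real.exp (t * ‖x - a‖ ^ 2)) ∂μ
      = ENNReal.ofReal κ * ∫⁻ x, (∫⁻ g : E, ENNReal.ofReal (Real.exp (-(1 / 2) * ‖g‖ ^ 2)) *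
          ENNReal.ofReal (Real.exp ⟪s • g, x - a⟫)) ∂μ := by
        simp only [ofReal_exp_mul_sq_norm_eq_lintegral ht]
        rw [lintegral_const_mul' _ _ ENNReal.ofReal_ne_top]
    _ = ENNReal.ofReal κ * ∫⁻ g : E, ENNReal.ofReal (Real.exp (-(1 / 2) * ‖g‖ ^ 2)) *
          ∫⁻ x, ENNReal.ofReal (Real.exp ⟪s • g, x - a⟫) ∂μ := by
        rw [lintegral_lintegral_swap (by fun_prop)]
        simp only [lintegral_const_mul' _ _ ENNReal.ofReal_ne_top]
    _ ≤ ENNReal.ofReal κ * ∫⁻ g : E, ENNReal.ofReal (Real.exp (-(r / 2) * ‖g‖ ^ 2)) *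
          ENNReal.ofReal (Real.exp ⟪s • g, m - a⟫) :=
        mul_le_mul_right (lintegral_mono fun g ↦ by
          simpa only [hs_sq] using exp_neg_mul_lintegral_exp_inner_smul_sub_le hμ a s g) _
    _ = ENNReal.ofReal (r ^ (-(finrank ℝ E : ℝ) / 2) * Real.exp (‖m - a‖ ^ 2 * t / r)) := by
        have hconst : κ * (Real.pi / (r / 2)) ^ (finrank ℝ E / 2 : ℝ) =
            r ^ (-(finrank ℝ E : ℝ) / 2) := by
          rw [div_div_eq_mul_div, mul_comm Real.pi, Real.div_rpow (by positivity) hr_pos.le, hκ,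
            neg_div, Real.rpow_neg (by positivity), Real.rpow_neg hr_pos.le]
          field_simp
        rw [lintegral_exp_neg_mul_sq_norm_mul_exp_inner (half_pos hr_pos),
          ← ENNReal.ofReal_mul (by positivity), ← mul_assoc, hconst, hs_sq]
        congr 3
        field_simp
        ring

end Linearization

lemma gibbsMeasure_eq_tilted {d : ℕ} {W : EuclideanSpace ℝ (Fin d) → ℝ}
    (hW : Integrable fun x ↦ Real.exp (-W x)) :
    gibbsMeasure d W = volume.tilted fun x ↦ -W x := by
  have hmass : (volume.withDensity fun x ↦ ENNReal.ofReal (Real.exp (-W x))) univ =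
      ENNReal.ofReal (∫ x, Real.exp (-W x)) := by
    rw [withDensity_apply _ .univ, setLIntegral_univ,
      ofReal_integral_eq_lintegral_ofReal hW (.of_forall fun _ ↦ by positivity)]
  have hpos := integral_exp_pos hW
  rw [gibbsMeasure, hmass, ← withDensity_smul' _ _ (by simpa), Measure.tilted]
  congr with x
  rw [Pi.smul_apply, smul_eq_mul, ENNReal.ofReal_div_of_pos hpos, mul_comm, div_eq_mul_inv]

theorem stmt4_general {E : Type*} [NormedAddCommGroup E] [InnerProductSpace ℝ E]
    [FiniteDimensional ℝ E] [MeasurableSpace E] [BorelSpace E] {α : ℝ} {W : E → ℝ}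
    (hW : StrongConvexOn univ α W) (a : E) {t : ℝ} (ht : 0 ≤ t) (htα : t < α / 2) :
    ∫⁻ x, ENNReal.ofReal (Real.exp (t * ‖x - a‖ ^ 2)) ∂volume.tilted (fun x ↦ -W x) ≤
      ENNReal.ofReal ((1 - 2 * t / α) ^ (-(finrank ℝ E : ℝ) / 2) *
        Real.exp (‖(∫ x, x ∂volume.tilted fun x ↦ -W x) - a‖ ^ 2 * t / (1 - 2 * t / α))) := by
  have hα : 0 < α := by linarith
  have hc : ((α.toNNReal⁻¹ : ℝ≥0) : ℝ) = α⁻¹ := by simp [hα.le]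
  have htc : 2 * t * (α.toNNReal⁻¹ : ℝ≥0) < 1 := by
    rw [hc, ← div_eq_mul_inv, div_lt_one hα]
    linarith
  simpa only [hc, ← div_eq_mul_inv] using lintegral_exp_mul_sq_norm_sub_le
    (hasSubgaussianMGF_inner_sub_integral_tilted hα hW) a ht htc

theorem stmt4 (d : ℕ) (hd : 1 ≤ d) (α : ℝ) (hα : 0 < α)
    (W : EuclideanSpace ℝ (Fin d) → ℝ) (hW : ContDiff ℝ 1 W)
    (hconv : ConvexOn ℝ Set.univ (fun x => W x - (α / 2) * ‖x‖ ^ 2))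
    (hint : Integrable (fun x => Real.exp (-W x)) volume)
    (xstar : EuclideanSpace ℝ (Fin d)) :
    ∀ t : ℝ, 0 ≤ t → t < α / 2 →
      ∫⁻ x, ENNReal.ofReal (Real.exp (t * ‖x - xstar‖ ^ 2)) ∂(gibbsMeasure d W) ≤
        ENNReal.ofReal ((1 - 2 * t / α) ^ (-(d : ℝ) / 2) *
          Real.exp (2 * ‖(∫ x, x ∂(gibbsMeasure d W)) - xstar‖ ^ 2 * t / (1 - 2 * t / α))) := by
  intro t ht htα
  have hr : 0 ≤ 1 - 2 * t / α := by
    rw [sub_nonneg, div_le_one hα]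
    linarith
  rw [gibbsMeasure_eq_tilted hint]
  refine (stmt4_general (strongConvexOn_iff_convex.2 hconv) xstar ht htα).trans ?_
  rw [finrank_euclideanSpace_fin]
  gcongr
  exact le_mul_of_one_le_left (sq_nonneg _) one_le_two
end

section
/- Let d ≥ 1 and let Q, V : ℝ^d → ℝ be C² functions with constants α_Q, α_V ∈ ℝ and β_V > 0 such that ∇²(Q + sV) ≽ (α_Q + s·α_V)·I with α_Q + s·α_V > 0 for every s ∈ [0,1], ∇²V ≼ β_V·I, and Q and V have a common stationary point x* with ∇Q(x*) = ∇V(x*) = 0 and V(x*) = 0. Then for every 0 ≤ λ ≤ λ' ≤ 1 with δ = λ' − λ, one has ∫ exp(−δ·V(x)) dπ_λ(x) ≥ exp( − δ·β_V·d / (2·(α_Q + λ·α_V)) ). -/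
open MeasureTheory

/-- The tempered probability measure `π_λ ∝ exp(−Q − λ V)` on `ℝ^d`. -/
noncomputable def tempMeasure (d : ℕ) (Q V : EuclideanSpace ℝ (Fin d) → ℝ) (lam : ℝ) :
    Measure (EuclideanSpace ℝ (Fin d)) :=
  ((volume.withDensity (fun x => ENNReal.ofReal (Real.exp (-(Q x + lam * V x))))) Set.univ)⁻¹ •
    volume.withDensity (fun x => ENNReal.ofReal (Real.exp (-(Q x + lam * V x))))

/-!
Let `f` be `α`-strongly convex and `W` be `β`-smooth on a space of dimension `d`, with a common
stationary point `x₀`. Along every ray from `x₀` the dilation by `t = √(1 + β / α)` raises `f` by at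
least `α / 2 * (t ^ 2 - 1) * ‖y‖ ^ 2 = β / 2 * ‖y‖ ^ 2`, which is the most that `W` can gain from
`x₀` to `x₀ + y`. Hence `exp (-f - W)` dominates `exp (-W x₀)` times the dilate of `exp (-f)`, whose
integral is `t⁻ᵈ` times that of `exp (-f)`; finally `t ^ 2 ≤ exp (β / α)`.
-/

open Filter Module Set
open scoped Topology

section StrongConvexity

variable {E : Type*} [NormedAddCommGroup E] [NormedSpace ℝ E]
  {s : Set E} {f g : E → ℝ} {f' : E →L[ℝ] ℝ} {m a b t : ℝ} {x y : E}

theorem add_fderiv_add_sq_norm_le_of_strongConvexOn (hf : StrongConvexOn s m f)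
    (hf' : HasFDerivWithinAt f f' s x) (hx : x ∈ s) (hxy : x + y ∈ s) :
    f x + f' y + m / 2 * ‖y‖ ^ 2 ≤ f (x + y) := by
  have combo (r : ℝ) : r • (x + y) + (1 - r) • x = x + r • y := by module
  have mem_s : MapsTo (fun r : ℝ => x + r • y) (Ioc 0 1) s := fun r hr => by
    simpa only [combo] using hf.1 hxy hx hr.1.le (sub_nonneg.2 hr.2) (add_sub_cancel r 1)
  have slope_tendsto : Tendsto (slope (fun r : ℝ => f (x + r • y)) 0) (𝓝[>] 0) (𝓝 (f' y)) := by
    have line_deriv : HasDerivWithinAt (fun r : ℝ => x + r • y) y (Ioc 0 1) 0 := by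
      simpa using (((hasDerivAt_id (0 : ℝ)).smul_const y).const_add x).hasDerivWithinAt
    have := hf'.comp_hasDerivWithinAt_of_eq 0 line_deriv mem_s (by simp)
    rwa [hasDerivWithinAt_iff_tendsto_slope' (by simp), nhdsWithin_Ioc_eq_nhdsGT one_pos] at this
  have bound_tendsto : Tendsto (fun r : ℝ => f (x + y) - f x - (1 - r) * (m / 2 * ‖y‖ ^ 2))
      (𝓝[>] 0) (𝓝 (f (x + y) - f x - (1 - 0) * (m / 2 * ‖y‖ ^ 2))) :=
    (Continuous.tendsto (by fun_prop) 0).mono_left nhdsWithin_le_nhds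
  have slope_le : ∀ᶠ r in 𝓝[>] (0 : ℝ), slope (fun r : ℝ => f (x + r • y)) 0 r ≤
      f (x + y) - f x - (1 - r) * (m / 2 * ‖y‖ ^ 2) := by
    filter_upwards [Ioc_mem_nhdsGT one_pos] with r hr
    have h := hf.2 hxy hx hr.1.le (sub_nonneg.2 hr.2) (add_sub_cancel r 1)
    simp only [combo, add_sub_cancel_left, smul_eq_mul] at h
    rw [slope_def_field, zero_smul, add_zero, sub_zero, div_le_iff₀ hr.1]
    linarith
  linarith [le_of_tendsto_of_tendsto slope_tendsto bound_tendsto slope_le]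

theorem le_add_fderiv_add_sq_norm_of_strongConcaveOn (hf : StrongConcaveOn s m f)
    (hf' : HasFDerivWithinAt f f' s x) (hx : x ∈ s) (hxy : x + y ∈ s) :
    f (x + y) ≤ f x + f' y - m / 2 * ‖y‖ ^ 2 := by
  have h := add_fderiv_add_sq_norm_le_of_strongConvexOn (UniformConcaveOn.neg hf) hf'.neg hx hxy
  simp only [Pi.neg_apply, neg_apply] at h
  linarith

theorem add_sq_norm_le_dilation_of_strongConvexOn (hf : StrongConvexOn s m f)
    (hf' : HasFDerivWithinAt f (0 : E →L[ℝ] ℝ) s x) (hx : x ∈ s) (ht : 1 ≤ t)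
    (hxy : x + t • y ∈ s) :
    f (x + y) + m / 2 * (t ^ 2 - 1) * ‖y‖ ^ 2 ≤ f (x + t • y) := by
  have ht0 : 0 < t := one_pos.trans_le ht
  have ht1 : 0 ≤ 1 - t⁻¹ := sub_nonneg.2 (inv_le_one_of_one_le₀ ht)
  have norm_sq : ‖t • y‖ ^ 2 = t ^ 2 * ‖y‖ ^ 2 := by
    rw [norm_smul, mul_pow, Real.norm_eq_abs, sq_abs]
  have combo : t⁻¹ • (x + t • y) + (1 - t⁻¹) • x = x + y := by
    rw [smul_add, inv_smul_smul₀ ht0.ne']; module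
  have convex_le := hf.2 hxy hx (inv_nonneg.2 ht0.le) ht1 (add_sub_cancel _ _)
  have growth := add_fderiv_add_sq_norm_le_of_strongConvexOn hf hf' hx hxy
  simp only [combo, add_sub_cancel_left, norm_sq, smul_eq_mul, zero_apply, add_zero]
    at convex_le growth
  calc f (x + y) + m / 2 * (t ^ 2 - 1) * ‖y‖ ^ 2
      ≤ t⁻¹ * f (x + t • y) + (1 - t⁻¹) * (f x + m / 2 * (t ^ 2 * ‖y‖ ^ 2)) := by
        have : t⁻¹ * (1 - t⁻¹) * (m / 2 * (t ^ 2 * ‖y‖ ^ 2)) +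
            (1 - t⁻¹) * (m / 2 * (t ^ 2 * ‖y‖ ^ 2)) = m / 2 * (t ^ 2 - 1) * ‖y‖ ^ 2 := by
          field_simp
          ring
        linarith
    _ ≤ t⁻¹ * f (x + t • y) + (1 - t⁻¹) * f (x + t • y) := by gcongr
    _ = f (x + t • y) := by ring

theorem add_le_dilation_sqrt_add (ha : 0 < a) (hb : 0 ≤ b) (hf : StrongConvexOn univ a f)
    (hg : StrongConcaveOn univ (-b) g) (hf' : HasFDerivAt f (0 : E →L[ℝ] ℝ) x)
    (hg' : HasFDerivAt g (0 : E →L[ℝ] ℝ) x) (y : E) :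
    f (x + y) + g (x + y) ≤ f (x + √(1 + b / a) • y) + g x := by
  have hr : 0 ≤ b / a := by positivity
  have f_growth := add_sq_norm_le_dilation_of_strongConvexOn hf hf'.hasFDerivWithinAt
    (mem_univ x) (Real.one_le_sqrt.2 (le_add_of_nonneg_right hr)) (mem_univ (x + √(1 + b / a) • y))
  have g_growth := le_add_fderiv_add_sq_norm_of_strongConcaveOn hg hg'.hasFDerivWithinAt
    (mem_univ x) (mem_univ (x + y))
  have gain : a / 2 * (√(1 + b / a) ^ 2 - 1) = b / 2 := by
    rw [Real.sq_sqrt (by positivity)]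
    field_simp
    ring
  rw [gain] at f_growth
  rw [zero_apply] at g_growth
  linarith

theorem strongConcaveOn_const_mul (hf : StrongConcaveOn s m f) {c : ℝ} (hc : 0 ≤ c) :
    StrongConcaveOn s (c * m) fun x => c * f x := by
  refine ⟨hf.1, fun x hx y hy p q hp hq hpq => ?_⟩
  have := mul_le_mul_of_nonneg_left (hf.2 hx hy hp hq hpq) hc
  simp only [smul_eq_mul] at this ⊢
  linarith

theorem continuous_of_strongConvexOn_s5 [FiniteDimensional ℝ E] (hf : StrongConvexOn univ m f)
    (hm : 0 ≤ m) : Continuous f :=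
  continuousOn_univ.1 ((strongConvexOn_zero.1 (hf.mono hm)).continuousOn isOpen_univ)

end StrongConvexity

theorem strongConcaveOn_neg_iff_convexOn {E : Type*} [NormedAddCommGroup E]
    [InnerProductSpace ℝ E] {s : Set E} {f : E → ℝ} {b : ℝ} :
    StrongConcaveOn s (-b) f ↔ ConvexOn ℝ s fun x => b / 2 * ‖x‖ ^ 2 - f x := by
  rw [strongConcaveOn_iff_convex, ← neg_convexOn_iff]
  congr! 2 with x
  simp only [Pi.neg_apply]
  ring

theorem inv_withDensity_exp_univ_smul_eq_tilted {Ω : Type*} [MeasurableSpace Ω] (μ : Measure Ω)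
    {f : Ω → ℝ} (hf : AEMeasurable f μ) :
    (μ.withDensity (fun x => ENNReal.ofReal (Real.exp (f x))) univ)⁻¹ •
      μ.withDensity (fun x => ENNReal.ofReal (Real.exp (f x))) = μ.tilted f := by
  have exp_nonneg : 0 ≤ᵐ[μ] fun x => Real.exp (f x) := .of_forall fun _ => (Real.exp_pos _).le
  rcases eq_zero_or_neZero μ with rfl | hμ
  · simp
  rw [withDensity_apply _ .univ, Measure.restrict_univ]
  by_cases hint : Integrable (fun x => Real.exp (f x)) μ
  · rw [Measure.tilted, ← ofReal_integral_eq_lintegral_ofReal hint exp_nonneg,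
      ← withDensity_smul' _ _ (by simp [integral_exp_pos hint])]
    congr with x
    rw [ENNReal.ofReal_div_of_pos (integral_exp_pos hint), Pi.smul_apply, smul_eq_mul,
      ENNReal.div_eq_inv_mul]
  · have lintegral_eq_top : ∫⁻ x, ENNReal.ofReal (Real.exp (f x)) ∂μ = ⊤ := by
      contrapose! hint
      exact (lintegral_ofReal_ne_top_iff_integrable hf.exp.aestronglyMeasurable exp_nonneg).1 hint
    rw [lintegral_eq_top, ENNReal.inv_top, zero_smul, tilted_of_not_integrable hint]

section Haar

variable {E : Type*} [NormedAddCommGroup E] [NormedSpace ℝ E] [FiniteDimensional ℝ E]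
  [MeasurableSpace E] [BorelSpace E] (μ : Measure E) [μ.IsAddHaarMeasure]
  {f W V : E → ℝ} {α β δ : ℝ} {x₀ : E}

theorem lintegral_comp_add_smul (g : E → ENNReal) (x : E) {t : ℝ} (ht : t ≠ 0) :
    ∫⁻ y, g (x + t • y) ∂μ = ENNReal.ofReal |(t ^ finrank ℝ E)⁻¹| * ∫⁻ y, g y ∂μ := by
  calc ∫⁻ y, g (x + t • y) ∂μ = ∫⁻ z, g (x + z) ∂(μ.map (t • ·)) :=
        ((measurableEmbedding_const_smul₀ ht).lintegral_map fun z => g (x + z)).symm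
    _ = ENNReal.ofReal |(t ^ finrank ℝ E)⁻¹| * ∫⁻ z, g (x + z) ∂μ := by
        rw [Measure.map_addHaar_smul μ ht, lintegral_smul_measure, smul_eq_mul]
    _ = ENNReal.ofReal |(t ^ finrank ℝ E)⁻¹| * ∫⁻ y, g y ∂μ := by
        rw [lintegral_add_left_eq_self]

theorem integrable_exp_neg_mul_sq_norm {b : ℝ} (hb : 0 < b) :
    Integrable (fun x : E => Real.exp (-b * ‖x‖ ^ 2)) μ := by
  rcases subsingleton_or_nontrivial E with hE | hE
  · exact .of_finite
  rw [integrable_fun_norm_addHaar μ (f := fun r => Real.exp (-b * r ^ 2))]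
  simpa only [Real.rpow_natCast, smul_eq_mul] using integrableOn_rpow_mul_exp_neg_mul_sq hb
    (neg_one_lt_zero.trans_le (Nat.cast_nonneg (finrank ℝ E - 1)))

theorem integrable_exp_neg_of_strongConvexOn_s5 (hα : 0 < α) (hf : StrongConvexOn univ α f)
    (hf' : HasFDerivAt f (0 : E →L[ℝ] ℝ) x₀) : Integrable (fun x => Real.exp (-f x)) μ := by
  have growth (x : E) : f x₀ + α / 2 * ‖x - x₀‖ ^ 2 ≤ f x := by
    simpa using add_fderiv_add_sq_norm_le_of_strongConvexOn hf hf'.hasFDerivWithinAt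
      (mem_univ x₀) (mem_univ (x₀ + (x - x₀)))
  have dominating := ((integrable_exp_neg_mul_sq_norm μ (half_pos hα)).comp_sub_right x₀).const_mul
    (Real.exp (-f x₀))
  have hfc := continuous_of_strongConvexOn_s5 hf hα.le
  refine dominating.mono' (by fun_prop) (.of_forall fun x => ?_)
  rw [Real.norm_of_nonneg (Real.exp_pos _).le, ← Real.exp_add, Real.exp_le_exp]
  linarith [growth x]

theorem rpow_le_lintegral_exp_neg_tilted (hα : 0 < α) (hβ : 0 ≤ β)
    (hf : StrongConvexOn univ α f) (hW : StrongConcaveOn univ (-β) W)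
    (hf' : HasFDerivAt f (0 : E →L[ℝ] ℝ) x₀) (hW' : HasFDerivAt W (0 : E →L[ℝ] ℝ) x₀) :
    ENNReal.ofReal (Real.exp (-W x₀) * (1 + β / α) ^ (-(finrank ℝ E / 2 : ℝ))) ≤
      ∫⁻ x, ENNReal.ofReal (Real.exp (-W x)) ∂(μ.tilted fun x => -f x) := by
  set t := √(1 + β / α)
  have ht : 0 < t := Real.sqrt_pos.2 (by positivity)
  have t_pow : |(t ^ finrank ℝ E)⁻¹| = (1 + β / α) ^ (-(finrank ℝ E / 2 : ℝ)) := by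
    rw [abs_of_pos (by positivity), Real.rpow_neg (by positivity),
      Real.rpow_div_two_eq_sqrt _ (by positivity), Real.rpow_natCast]
  have hint := integrable_exp_neg_of_strongConvexOn_s5 μ hα hf hf'
  have := isProbabilityMeasure_tilted hint
  set Z := ∫ x, Real.exp (-f x) ∂μ
  let ρ : E → ENNReal := fun x => ENNReal.ofReal (Real.exp (-f x) / Z)
  have ρ_lintegral : ∫⁻ x, ρ x ∂μ = 1 := by
    rw [← setLIntegral_univ, ← tilted_apply' _ _ .univ, measure_univ]
  have dilate_le (y : E) : ENNReal.ofReal (Real.exp (-W x₀)) * ρ (x₀ + t • y) ≤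
      ρ (x₀ + y) * ENNReal.ofReal (Real.exp (-W (x₀ + y))) := by
    have hZ : 0 < Z := integral_exp_pos hint
    rw [← ENNReal.ofReal_mul (by positivity), ← ENNReal.ofReal_mul (by positivity),
      ← mul_div_assoc, div_mul_eq_mul_div, ← Real.exp_add, ← Real.exp_add]
    gcongr ENNReal.ofReal (Real.exp ?_ / Z)
    linarith [add_le_dilation_sqrt_add hα hβ hf hW hf' hW' y]
  calc ENNReal.ofReal (Real.exp (-W x₀) * (1 + β / α) ^ (-(finrank ℝ E / 2 : ℝ)))
      = ENNReal.ofReal (Real.exp (-W x₀)) * ∫⁻ y, ρ (x₀ + t • y) ∂μ := by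
        rw [lintegral_comp_add_smul μ ρ x₀ ht.ne', ρ_lintegral, mul_one, t_pow,
          ENNReal.ofReal_mul (Real.exp_pos _).le]
    _ ≤ ∫⁻ y, ρ (x₀ + y) * ENNReal.ofReal (Real.exp (-W (x₀ + y))) ∂μ := by
        rw [← lintegral_const_mul' _ _ ENNReal.ofReal_ne_top]
        exact lintegral_mono dilate_le
    _ = ∫⁻ x, ENNReal.ofReal (Real.exp (-W x)) ∂(μ.tilted fun x => -f x) := by
        rw [lintegral_add_left_eq_self (fun x => ρ x * ENNReal.ofReal (Real.exp (-W x))) x₀,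
          lintegral_tilted]

theorem stmt5_general (hα : 0 < α) (hβ : 0 ≤ β) (hδ : 0 ≤ δ)
    (hf : StrongConvexOn univ α f) (hV : StrongConcaveOn univ (-β) V)
    (hf' : HasFDerivAt f (0 : E →L[ℝ] ℝ) x₀) (hV' : HasFDerivAt V (0 : E →L[ℝ] ℝ) x₀) :
    ENNReal.ofReal (Real.exp (-(δ * V x₀) - δ * β * finrank ℝ E / (2 * α))) ≤
      ∫⁻ x, ENNReal.ofReal (Real.exp (-(δ * V x))) ∂(μ.tilted fun x => -f x) := by
  have hδV : StrongConcaveOn univ (-(δ * β)) fun x => δ * V x := by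
    simpa only [mul_neg] using strongConcaveOn_const_mul hV hδ
  have hδV' : HasFDerivAt (fun x => δ * V x) (0 : E →L[ℝ] ℝ) x₀ := by simpa using hV'.const_mul δ
  refine le_trans (ENNReal.ofReal_le_ofReal ?_)
    (rpow_le_lintegral_exp_neg_tilted μ hα (mul_nonneg hδ hβ) hf hδV hf' hδV')
  calc Real.exp (-(δ * V x₀) - δ * β * finrank ℝ E / (2 * α))
      = Real.exp (-(δ * V x₀)) * Real.exp (δ * β / α) ^ (-(finrank ℝ E / 2 : ℝ)) := by
        rw [← Real.exp_mul, ← Real.exp_add]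
        congr 1
        field_simp
        ring
    _ ≤ Real.exp (-(δ * V x₀)) * (1 + δ * β / α) ^ (-(finrank ℝ E / 2 : ℝ)) := by
        gcongr Real.exp (-(δ * V x₀)) * ?_
        exact Real.rpow_le_rpow_of_nonpos (by positivity)
          ((add_comm _ _).trans_le (Real.add_one_le_exp _)) (neg_nonpos.2 (by positivity))

end Haar

theorem tempMeasure_eq_tilted {d : ℕ} {Q V : EuclideanSpace ℝ (Fin d) → ℝ} (hQ : Measurable Q)
    (hV : Measurable V) (lam : ℝ) :
    tempMeasure d Q V lam = volume.tilted fun x => -(Q x + lam * V x) :=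
  inv_withDensity_exp_univ_smul_eq_tilted volume (by fun_prop)

theorem stmt5 (d : ℕ) (hd : 1 ≤ d) (Q V : EuclideanSpace ℝ (Fin d) → ℝ)
    (hQ : ContDiff ℝ 2 Q) (hV : ContDiff ℝ 2 V)
    (αQ αV βV : ℝ) (hβV : 0 < βV)
    (hconv : ∀ s ∈ Set.Icc (0 : ℝ) 1,
      0 < αQ + s * αV ∧
      ConvexOn ℝ Set.univ (fun x => Q x + s * V x - ((αQ + s * αV) / 2) * ‖x‖ ^ 2))
    (hsmooth : ConvexOn ℝ Set.univ (fun x => (βV / 2) * ‖x‖ ^ 2 - V x))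
    (xstar : EuclideanSpace ℝ (Fin d))
    (hQcrit : fderiv ℝ Q xstar = 0) (hVcrit : fderiv ℝ V xstar = 0)
    (hVstar : V xstar = 0) :
    ∀ lam lam' : ℝ, 0 ≤ lam → lam ≤ lam' → lam' ≤ 1 →
      ENNReal.ofReal (Real.exp (-((lam' - lam) * βV * d) / (2 * (αQ + lam * αV)))) ≤
        ∫⁻ x, ENNReal.ofReal (Real.exp (-((lam' - lam) * V x))) ∂(tempMeasure d Q V lam) := by
  intro lam lam' h0 hle h1
  obtain ⟨hα, hUconv⟩ := hconv lam ⟨h0, hle.trans h1⟩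
  have hQ' : HasFDerivAt Q 0 xstar :=
    hQcrit ▸ (hQ.differentiable two_ne_zero xstar).hasFDerivAt
  have hV' : HasFDerivAt V 0 xstar :=
    hVcrit ▸ (hV.differentiable two_ne_zero xstar).hasFDerivAt
  have hU' : HasFDerivAt (fun x => Q x + lam * V x)
      (0 : EuclideanSpace ℝ (Fin d) →L[ℝ] ℝ) xstar := by
    simpa using hQ'.fun_add (hV'.const_mul lam)
  rw [tempMeasure_eq_tilted hQ.continuous.measurable hV.continuous.measurable]
  simpa [hVstar, neg_div] using stmt5_general volume hα hβV.le (sub_nonneg.2 hle)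
    (strongConvexOn_iff_convex.2 hUconv) (strongConcaveOn_neg_iff_convexOn.2 hsmooth) hU' hV'
end

section
/- Let T ≥ 0 be an integer, ε ∈ (0,1), η ∈ (0,1), and set J = 12·⌈log((T+1)/η)⌉ + 1. Let Z_0,…,Z_T be positive reals and, on a probability space, let {Ẑ_t^{(j)} : 0 ≤ t ≤ T, 1 ≤ j ≤ J} be real random variables such that the J random vectors (Ẑ_0^{(j)},…,Ẑ_T^{(j)}), j = 1,…,J, are mutually independent, and such that for every t and every j, P( |Ẑ_t^{(j)}/Z_t − 1| < ε/(T+1) ) ≥ 3/4. For each t, let M_t be the median of the J values Ẑ_t^{(1)},…,Ẑ_t^{(J)}. Then P( | (∏_{t=0}^T M_t) / (∏_{t=0}^T Z_t) − 1 | < 2ε ) ≥ 1 − η. -/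
open MeasureTheory ProbabilityTheory

open scoped Classical in
/-- `m` is a median of the `J` values `x 1, …, x J`: it is one of the values, at least
half of the values are `≤ m` and at least half are `≥ m`. -/
def IsMedian {J : ℕ} (x : Fin J → ℝ) (m : ℝ) : Prop :=
  ∃ i : Fin J, x i = m ∧
    (J : ℝ) / 2 ≤ (Finset.univ.filter fun j => x j ≤ m).card ∧
    (J : ℝ) / 2 ≤ (Finset.univ.filter fun j => m ≤ x j).card

/-!
An event of probability at least `1 / 2 + γ` that is observed independently `J` times fails in at
least half of the observations with probability at most `exp (-2 * J * γ ^ 2)`, by Hoeffding's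
inequality. When fewer than half of the values leave an interval, one value in the interval is at
most the median and another one is at least the median, so the median lies in the interval too.
With `γ = 1 / 4` and `J ≥ 8 * log (n / η)`, where `n` is the number of coordinates, each median
thus misses its interval of relative radius `ε / n` with probability at most `η / n`. A union bound
makes all relative errors `aₜ` small at once, and `|∏ (1 + aₜ) - 1|` is at most
`exp (∑ |aₜ|) - 1 ≤ 2 * ∑ |aₜ|`.
-/

open scoped Classical in
theorem IsMedian.half_le_card_filter_notMem {J : ℕ} {x : Fin J → ℝ} {m : ℝ} (hm : IsMedian x m)
    {s : Set ℝ} (hs : s.OrdConnected) (hms : m ∉ s) :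
    (J : ℝ) / 2 ≤ (Finset.univ.filter fun j => x j ∉ s).card := by
  by_contra! hcard
  obtain ⟨-, -, hle, hge⟩ := hm
  obtain ⟨j, hj, hjs⟩ := Finset.exists_mem_notMem_of_card_lt_card
    (Nat.cast_lt.mp (hcard.trans_le hle))
  obtain ⟨k, hk, hks⟩ := Finset.exists_mem_notMem_of_card_lt_card
    (Nat.cast_lt.mp (hcard.trans_le hge))
  simp only [Finset.mem_filter_univ, not_not] at hj hjs hk hks
  exact hms (hs.out hjs hks ⟨hj, hk⟩)

theorem setOf_abs_div_sub_one_lt_eq_ball {z : ℝ} (hz : z ≠ 0) (δ : ℝ) :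
    {x : ℝ | |x / z - 1| < δ} = Metric.ball z (δ * |z|) := by
  ext x
  rw [Set.mem_ofPred_eq, Metric.mem_ball, Real.dist_eq, div_sub_one hz, abs_div,
    div_lt_iff₀ (abs_pos.mpr hz)]

theorem ordConnected_setOf_abs_div_sub_one_lt {z : ℝ} (hz : z ≠ 0) (δ : ℝ) :
    {x : ℝ | |x / z - 1| < δ}.OrdConnected := by
  rw [setOf_abs_div_sub_one_lt_eq_ball hz]
  exact (convex_ball _ _).ordConnected

theorem norm_prod_sub_one_le_two_mul_sum {ι R : Type*} [NormedCommRing R] [NormOneClass R]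
    {s : Finset ι} {f : ι → R} (hf : ∑ i ∈ s, ‖f i - 1‖ ≤ 1) :
    ‖∏ i ∈ s, f i - 1‖ ≤ 2 * ∑ i ∈ s, ‖f i - 1‖ := by
  have hsum : |∑ i ∈ s, ‖f i - 1‖| = ∑ i ∈ s, ‖f i - 1‖ := abs_of_nonneg (by positivity)
  calc ‖∏ i ∈ s, f i - 1‖ ≤ Real.exp (∑ i ∈ s, ‖f i - 1‖) - 1 := by
        simpa only [add_sub_cancel] using s.norm_prod_one_add_sub_one_le fun i => f i - 1
    _ ≤ |Real.exp (∑ i ∈ s, ‖f i - 1‖) - 1| := le_abs_self _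
    _ ≤ 2 * ∑ i ∈ s, ‖f i - 1‖ := by
        simpa only [hsum] using Real.abs_exp_sub_one_le (hsum.trans_le hf)

theorem sum_lt_of_forall_lt_div_card {ι : Type*} [Fintype ι] {f : ι → ℝ} {ε : ℝ} (hε : 0 < ε)
    (hf : ∀ i, f i < ε / Fintype.card ι) : ∑ i, f i < ε := by
  rcases isEmpty_or_nonempty ι with _ | _
  · simpa using hε
  · calc ∑ i, f i < ∑ _i : ι, ε / Fintype.card ι :=
          Finset.sum_lt_sum_of_nonempty Finset.univ_nonempty fun i _ => hf i
      _ = ε := by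
          rw [Finset.sum_const, Finset.card_univ, nsmul_eq_mul, mul_div_cancel₀]
          exact_mod_cast Fintype.card_ne_zero

theorem norm_prod_sub_one_lt_two_mul {ι R : Type*} [Fintype ι] [NormedCommRing R]
    [NormOneClass R] {f : ι → R} {ε : ℝ} (hε : ε ∈ Set.Ioc (0 : ℝ) 1)
    (hf : ∀ i, ‖f i - 1‖ < ε / Fintype.card ι) : ‖∏ i, f i - 1‖ < 2 * ε := by
  have hsum : ∑ i, ‖f i - 1‖ < ε := sum_lt_of_forall_lt_div_card hε.1 hf
  exact (norm_prod_sub_one_le_two_mul_sum (hsum.le.trans hε.2)).trans_lt (by gcongr)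

theorem card_mul_exp_neg_le {n : ℕ} {η c : ℝ} (hη : 0 < η) (hc : Real.log (n / η) ≤ c) :
    n * Real.exp (-c) ≤ η := by
  rcases n.eq_zero_or_pos with rfl | hn
  · simpa using hη.le
  · have hexp : n / η ≤ Real.exp c := (Real.log_le_iff_le_exp (by positivity)).mp hc
    rw [Real.exp_neg, ← div_eq_mul_inv]
    exact (div_le_comm₀ (Real.exp_pos c) hη).mpr hexp

theorem eight_mul_le_twelve_mul_ceil_add_one (x : ℝ) : 8 * x ≤ (12 * ⌈x⌉₊ + 1 : ℕ) := by
  have hx := Nat.le_ceil x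
  push_cast
  linarith

section Probability

variable {Ω ι : Type*} [MeasurableSpace Ω] {P : Measure Ω}

theorem iIndepSet_preimage {β : ι → Type*} [∀ i, MeasurableSpace (β i)]
    {X : ∀ i, Ω → β i} (hX : ∀ i, Measurable (X i))
    (hindep : iIndepFun X P) {s : ∀ i, Set (β i)} (hs : ∀ i, MeasurableSet (s i)) :
    iIndepSet (fun i => X i ⁻¹' s i) P :=
  (iIndepSet_iff_meas_biInter fun i => hX i (hs i)).mpr fun _ =>
    hindep.meas_biInter fun i _ => ⟨s i, hs i, rfl⟩

theorem hasSubgaussianMGF_indicator_one_sub_measureReal [IsProbabilityMeasure P] {s : Set Ω}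
    (hs : MeasurableSet s) :
    HasSubgaussianMGF (fun ω => s.indicator 1 ω - P.real s) (1 / 4) P := by
  have hmem (ω : Ω) : s.indicator 1 ω ∈ Set.Icc (0 : ℝ) 1 :=
    ⟨Set.indicator_nonneg (fun _ _ => zero_le_one) ω,
      Set.indicator_le_self' (fun _ _ => zero_le_one) ω⟩
  have hparam : (‖(1 : ℝ) - 0‖₊ / 2) ^ 2 = 1 / 4 := by
    rw [sub_zero, nnnorm_one]
    norm_num
  rw [← integral_indicator_one hs, ← hparam]
  exact hasSubgaussianMGF_of_mem_Icc (measurable_one.indicator hs).aemeasurable (.of_forall hmem)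

open scoped Classical in
theorem measureReal_le_card_filter_mem_le [Fintype ι] [IsProbabilityMeasure P]
    {A : ι → Set Ω} (hA : ∀ i, MeasurableSet (A i)) (hindep : iIndepSet A P) {p u : ℝ}
    (hp : ∀ i, P.real (A i) ≤ p) (hu : 0 ≤ u) :
    P.real {ω | Fintype.card ι * (p + u) ≤ (Finset.univ.filter fun i => ω ∈ A i).card} ≤
      Real.exp (-2 * Fintype.card ι * u ^ 2) := by
  let Y (i : ι) (ω : Ω) : ℝ := (A i).indicator 1 ω - P.real (A i)
  have hindepY : iIndepFun Y P :=
    hindep.iIndepFun_indicator.comp (fun i y => y - P.real (A i))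
      fun i => measurable_id.sub_const _
  have hmean : ∑ i, P.real (A i) ≤ Fintype.card ι * p :=
    (Finset.sum_le_card_nsmul _ _ _ fun i _ => hp i).trans_eq (nsmul_eq_mul _ _)
  have hsum (ω : Ω) :
      ∑ i, Y i ω = (Finset.univ.filter fun i => ω ∈ A i).card - ∑ i, P.real (A i) := by
    simp [Y, Set.indicator_apply]
  calc P.real {ω | Fintype.card ι * (p + u) ≤ (Finset.univ.filter fun i => ω ∈ A i).card}
      ≤ P.real {ω | Fintype.card ι * u ≤ ∑ i, Y i ω} := by
        refine measureReal_mono fun ω hω => ?_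
        rw [Set.mem_ofPred_eq] at hω ⊢
        linarith [hsum ω]
    _ ≤ Real.exp (-(Fintype.card ι * u) ^ 2 / (2 * (∑ _i : ι, 1 / 4 : NNReal))) :=
        HasSubgaussianMGF.measure_sum_ge_le_of_iIndepFun hindepY
          (fun i _ => hasSubgaussianMGF_indicator_one_sub_measureReal (hA i)) (by positivity)
    _ = Real.exp (-2 * Fintype.card ι * u ^ 2) := by
        congr 1
        rcases eq_or_ne (Fintype.card ι : ℝ) 0 with h | h
        · simp [h]
        · rw [Finset.sum_const, Finset.card_univ, nsmul_eq_mul]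
          push_cast
          field_simp
          norm_num

theorem measureReal_median_notMem_le [IsProbabilityMeasure P] {J : ℕ}
    {X : Fin J → Ω → ℝ} (hX : ∀ j, Measurable (X j)) (hindep : iIndepFun X P) {s : Set ℝ}
    (hs : s.OrdConnected) {γ : ℝ} (hγ : 0 ≤ γ)
    (hmem : ∀ j, 1 / 2 + γ ≤ P.real {ω | X j ω ∈ s}) {M : Ω → ℝ}
    (hM : ∀ ω, IsMedian (fun j => X j ω) (M ω)) :
    P.real {ω | M ω ∉ s} ≤ Real.exp (-2 * J * γ ^ 2) := by
  have hmiss (j : Fin J) : P.real (X j ⁻¹' sᶜ) ≤ 1 / 2 - γ := by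
    have hhit : 1 / 2 + γ ≤ P.real (X j ⁻¹' s) := hmem j
    rw [Set.preimage_compl, probReal_compl_eq_one_sub (hX j hs.measurableSet)]
    linarith
  have hhoeffding := measureReal_le_card_filter_mem_le
    (fun j => hX j hs.measurableSet.compl)
    (iIndepSet_preimage hX hindep fun _ => hs.measurableSet.compl) hmiss hγ
  rw [Fintype.card_fin, sub_add_cancel, mul_one_div] at hhoeffding
  refine (measureReal_mono fun ω hω => ?_).trans hhoeffding
  rw [Set.mem_ofPred_eq]
  convert (hM ω).half_le_card_filter_notMem hs hω

theorem one_sub_sum_measureReal_compl_le_measureReal_iInter [Fintype ι]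
    [IsProbabilityMeasure P] (E : ι → Set Ω) :
    1 - ∑ i, P.real (E i)ᶜ ≤ P.real (⋂ i, E i) := by
  rw [sub_le_iff_le_add]
  calc 1 = P.real ((⋂ i, E i) ∪ (⋂ i, E i)ᶜ) := by rw [Set.union_compl_self, probReal_univ]
    _ ≤ P.real (⋂ i, E i) + P.real (⋃ i, (E i)ᶜ) := by
        rw [← Set.compl_iInter]
        exact measureReal_union_le _ _
    _ ≤ P.real (⋂ i, E i) + ∑ i, P.real (E i)ᶜ := by
        gcongr
        exact measureReal_iUnion_fintype_le _

end Probability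

theorem stmt7_general {Ω ι : Type*} [MeasurableSpace Ω] [Fintype ι] {P : Measure Ω}
    [IsProbabilityMeasure P] {ε η : ℝ} (hε : ε ∈ Set.Ioc (0 : ℝ) 1) (hη : 0 < η)
    {J : ℕ} (hJ : 8 * Real.log (Fintype.card ι / η) ≤ J) {Z : ι → ℝ} (hZ : ∀ t, Z t ≠ 0)
    {Zhat : ι → Fin J → Ω → ℝ} (hmeas : ∀ t j, Measurable (Zhat t j))
    (hindep : ∀ t, iIndepFun (Zhat t) P)
    (hconc : ∀ t j,
      ENNReal.ofReal (3 / 4) ≤ P {ω | |Zhat t j ω / Z t - 1| < ε / Fintype.card ι})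
    {M : ι → Ω → ℝ} (hM : ∀ t ω, IsMedian (fun j => Zhat t j ω) (M t ω)) :
    ENNReal.ofReal (1 - η) ≤ P {ω | |(∏ t, M t ω) / (∏ t, Z t) - 1| < 2 * ε} := by
  let E (t : ι) : Set Ω := {ω | |M t ω / Z t - 1| < ε / Fintype.card ι}
  have hE (t : ι) : P.real (E t)ᶜ ≤ Real.exp (-(J / 8)) := by
    have hconc_real (j : Fin J) :
        1 / 2 + 1 / 4 ≤ P.real {ω | |Zhat t j ω / Z t - 1| < ε / Fintype.card ι} := by
      rw [show (1 / 2 + 1 / 4 : ℝ) = 3 / 4 by norm_num]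
      exact (ENNReal.ofReal_le_iff_le_toReal (measure_ne_top _ _)).mp (hconc t j)
    calc P.real (E t)ᶜ ≤ Real.exp (-2 * J * (1 / 4) ^ 2) :=
          measureReal_median_notMem_le (hmeas t) (hindep t)
            (ordConnected_setOf_abs_div_sub_one_lt (hZ t) _) (by norm_num) hconc_real (hM t)
      _ = Real.exp (-(J / 8)) := by ring_nf
  have hsum : ∑ t, P.real (E t)ᶜ ≤ η :=
    calc ∑ t, P.real (E t)ᶜ ≤ Fintype.card ι * Real.exp (-(J / 8)) :=
          (Finset.sum_le_card_nsmul _ _ _ fun t _ => hE t).trans_eq (nsmul_eq_mul _ _)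
      _ ≤ η := card_mul_exp_neg_le hη (by linarith)
  have hinter : ⋂ t, E t ⊆ {ω | |(∏ t, M t ω) / (∏ t, Z t) - 1| < 2 * ε} := by
    intro ω hω
    have hrel (t : ι) : ‖M t ω / Z t - 1‖ < ε / Fintype.card ι := Set.mem_iInter.mp hω t
    rw [Set.mem_ofPred_eq, ← Finset.prod_div_distrib]
    exact norm_prod_sub_one_lt_two_mul hε hrel
  rw [ENNReal.ofReal_le_iff_le_toReal (measure_ne_top _ _)]
  calc 1 - η ≤ 1 - ∑ t, P.real (E t)ᶜ := by gcongr
    _ ≤ P.real (⋂ t, E t) := one_sub_sum_measureReal_compl_le_measureReal_iInter E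
    _ ≤ P.real {ω | |(∏ t, M t ω) / (∏ t, Z t) - 1| < 2 * ε} := measureReal_mono hinter

theorem stmt7 {Ω : Type*} [MeasurableSpace Ω] (P : Measure Ω) [IsProbabilityMeasure P]
    (T : ℕ) (ε η : ℝ) (hε : ε ∈ Set.Ioo (0 : ℝ) 1) (hη : η ∈ Set.Ioo (0 : ℝ) 1)
    (J : ℕ) (hJ : J = 12 * ⌈Real.log ((T + 1 : ℝ) / η)⌉₊ + 1)
    (Z : Fin (T + 1) → ℝ) (hZ : ∀ t, 0 < Z t)
    (Zhat : Fin (T + 1) → Fin J → Ω → ℝ)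
    (hmeas : ∀ t j, Measurable (Zhat t j))
    (hindep : iIndepFun (m := fun _ : Fin J => (inferInstance : MeasurableSpace (Fin (T + 1) → ℝ)))
      (fun j ω t => Zhat t j ω) P)
    (hconc : ∀ t j,
      ENNReal.ofReal (3 / 4) ≤ P {ω | |Zhat t j ω / Z t - 1| < ε / (T + 1)})
    (M : Fin (T + 1) → Ω → ℝ)
    (hM : ∀ t ω, IsMedian (fun j => Zhat t j ω) (M t ω)) :
    ENNReal.ofReal (1 - η) ≤
      P {ω | |(∏ t, M t ω) / (∏ t, Z t) - 1| < 2 * ε} := by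
  subst hJ
  exact stmt7_general (Set.Ioo_subset_Ioc_self hε) hη.1
    (by simpa using eight_mul_le_twelve_mul_ceil_add_one (Real.log ((T + 1 : ℝ) / η)))
    (fun t => (hZ t).ne') hmeas
    (fun t => hindep.comp (fun _ v => v t) fun _ => measurable_pi_apply t)
    (by simpa using hconc) hM
end

section
/- Let (Ω, F, P) be a probability space, T ≥ 0 an integer, V_0,…,V_T real random variables, and Ω = C_{−1} ⊇ C_0 ⊇ ⋯ ⊇ C_{T−1} a decreasing sequence of events with P(C_{T−1}) > 0. Then for every ε ∈ (0,2): P( |∏_{t=0}^T V_t − 1| ≥ ε ) ≤ P(C_{T−1}^c) + (4(T+1)²/ε²) · Σ_{t=0}^T E[ (V_t − 1)² ∣ C_{t−1} ]. -/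
open MeasureTheory

/-- Conditional expectation of the nonnegative (possibly infinite) random variable `X`
given the event `C`, namely `E[X·1_C]/P(C)`, valued in `[0,∞]`. -/
noncomputable def condExpEvent {Ω : Type*} [MeasurableSpace Ω] (P : Measure Ω)
    (C : Set Ω) (X : Ω → ENNReal) : ENNReal :=
  (∫⁻ ω in C, X ω ∂P) / P C

/-! If `∑ ‖x i - 1‖ ≤ 1`, then `‖∏ x i - 1‖ ≤ exp (∑ ‖x i - 1‖) - 1 ≤ 2 ∑ ‖x i - 1‖`. Hence, for
`ε ≤ 2`, a product of `n` factors can only be `ε`-far from `1` when some factor is `ε / (2n)`-far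
from `1`. On the intersection of the conditioning events each of these `n` possibilities is
controlled by Chebyshev's inequality, and passing from `E[X·1_C]` to `E[X ∣ C]` only increases the
bound because `P C ≤ 1`. -/

section Product

variable {ι R : Type*} [NormedCommRing R] [NormOneClass R] {s : Finset ι} {x : ι → R}

lemma norm_prod_sub_one_le_two_mul_sum_s8 (hx : ∑ i ∈ s, ‖x i - 1‖ ≤ 1) :
    ‖∏ i ∈ s, x i - 1‖ ≤ 2 * ∑ i ∈ s, ‖x i - 1‖ := by
  have hsum_nonneg : 0 ≤ ∑ i ∈ s, ‖x i - 1‖ := by positivity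
  calc ‖∏ i ∈ s, x i - 1‖ = ‖∏ i ∈ s, (1 + (x i - 1)) - 1‖ := by simp only [add_sub_cancel]
    _ ≤ Real.exp (∑ i ∈ s, ‖x i - 1‖) - 1 := s.norm_prod_one_add_sub_one_le fun i => x i - 1
    _ ≤ |Real.exp (∑ i ∈ s, ‖x i - 1‖) - 1| := le_abs_self _
    _ ≤ 2 * |∑ i ∈ s, ‖x i - 1‖| :=
      Real.abs_exp_sub_one_le (by rwa [abs_of_nonneg hsum_nonneg])
    _ = 2 * ∑ i ∈ s, ‖x i - 1‖ := by rw [abs_of_nonneg hsum_nonneg]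

lemma half_le_sum_norm_sub_one {ε : ℝ} (hε : ε ≤ 2) (hx : ε ≤ ‖∏ i ∈ s, x i - 1‖) :
    ε / 2 ≤ ∑ i ∈ s, ‖x i - 1‖ := by
  by_contra! hlt
  have hprod := norm_prod_sub_one_le_two_mul_sum_s8 (s := s) (x := x) (by linarith)
  linarith

lemma exists_div_two_mul_card_le_norm_sub_one {ε : ℝ} (hε₀ : 0 < ε) (hε : ε ≤ 2)
    (hx : ε ≤ ‖∏ i ∈ s, x i - 1‖) : ∃ i ∈ s, ε / (2 * s.card) ≤ ‖x i - 1‖ := by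
  have hs : s.Nonempty := by
    by_contra! rfl
    simp only [Finset.prod_empty, sub_self, norm_zero] at hx
    exact hx.not_gt hε₀
  refine Finset.exists_le_of_sum_le hs ?_
  calc ∑ _i ∈ s, ε / (2 * s.card) = ε / 2 := by
        have := hs.card_pos
        rw [Finset.sum_const, nsmul_eq_mul]
        field_simp
    _ ≤ ∑ i ∈ s, ‖x i - 1‖ := half_le_sum_norm_sub_one hε hx

lemma setOf_le_norm_prod_sub_one_subset {Ω : Type*} [Fintype ι] (V : ι → Ω → R) (D : ι → Set Ω)
    {ε : ℝ} (hε₀ : 0 < ε) (hε : ε ≤ 2) :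
    {ω | ε ≤ ‖∏ i, V i ω - 1‖} ⊆
      (⋂ i, D i)ᶜ ∪ ⋃ i, {ω | ε / (2 * Fintype.card ι) ≤ ‖V i ω - 1‖} ∩ D i := by
  intro ω hω
  by_cases hD : ω ∈ ⋂ i, D i
  · obtain ⟨i, -, hi⟩ := exists_div_two_mul_card_le_norm_sub_one hε₀ hε hω
    exact .inr (Set.mem_iUnion.2 ⟨i, hi, Set.mem_iInter.1 hD i⟩)
  · exact .inl hD

end Product

section Chebyshev

variable {Ω : Type*} [MeasurableSpace Ω] {P : Measure Ω} [IsZeroOrProbabilityMeasure P]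

lemma setLIntegral_le_condExpEvent (C : Set Ω) (X : Ω → ENNReal) :
    ∫⁻ ω in C, X ω ∂P ≤ condExpEvent P C X := by
  rw [condExpEvent, ENNReal.div_eq_inv_mul]
  exact le_mul_of_one_le_left zero_le (ENNReal.one_le_inv.2 prob_le_one)

lemma mul_measure_inter_le_condExpEvent {C : Set Ω} {X : Ω → ENNReal}
    (hX : AEMeasurable X (P.restrict C)) (c : ENNReal) :
    c * P ({ω | c ≤ X ω} ∩ C) ≤ condExpEvent P C X :=
  calc c * P ({ω | c ≤ X ω} ∩ C) ≤ c * P.restrict C {ω | c ≤ X ω} :=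
        mul_le_mul_right (Measure.le_restrict_apply _ _) c
    _ ≤ ∫⁻ ω in C, X ω ∂P := mul_meas_ge_le_lintegral₀ hX c
    _ ≤ condExpEvent P C X := setLIntegral_le_condExpEvent C X

lemma measure_le_norm_inter_le_condExpEvent {E : Type*} [SeminormedAddCommGroup E] {C : Set Ω}
    {f : Ω → E} (hf : AEStronglyMeasurable f (P.restrict C)) {δ : ℝ} (hδ : 0 < δ) :
    P ({ω | δ ≤ ‖f ω‖} ∩ C) ≤
      ENNReal.ofReal (δ ^ 2)⁻¹ * condExpEvent P C (fun ω => ENNReal.ofReal (‖f ω‖ ^ 2)) := by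
  have hδ_sq : 0 < δ ^ 2 := by positivity
  have hsub : {ω | δ ≤ ‖f ω‖} ⊆ {ω | ENNReal.ofReal (δ ^ 2) ≤ ENNReal.ofReal (‖f ω‖ ^ 2)} :=
    fun ω (hω : δ ≤ ‖f ω‖) => ENNReal.ofReal_le_ofReal (by gcongr)
  rw [ENNReal.ofReal_inv_of_pos hδ_sq, ← ENNReal.mul_le_iff_le_inv
    (ENNReal.ofReal_pos.2 hδ_sq).ne' ENNReal.ofReal_ne_top]
  calc ENNReal.ofReal (δ ^ 2) * P ({ω | δ ≤ ‖f ω‖} ∩ C)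
      ≤ ENNReal.ofReal (δ ^ 2) *
          P ({ω | ENNReal.ofReal (δ ^ 2) ≤ ENNReal.ofReal (‖f ω‖ ^ 2)} ∩ C) := by gcongr
    _ ≤ condExpEvent P C (fun ω => ENNReal.ofReal (‖f ω‖ ^ 2)) :=
      mul_measure_inter_le_condExpEvent (hf.norm.aemeasurable.pow_const 2).ennreal_ofReal _

theorem stmt8_general {ι R : Type*} [Fintype ι] [NormedCommRing R] [NormOneClass R]
    (V : ι → Ω → R) (D : ι → Set Ω)
    (hV : ∀ i, AEStronglyMeasurable (V i) (P.restrict (D i))) {ε : ℝ} (hε₀ : 0 < ε) (hε : ε ≤ 2) :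
    P {ω | ε ≤ ‖∏ i, V i ω - 1‖} ≤
      P (⋂ i, D i)ᶜ +
        ENNReal.ofReal (4 * Fintype.card ι ^ 2 / ε ^ 2) *
          ∑ i, condExpEvent P (D i) (fun ω => ENNReal.ofReal (‖V i ω - 1‖ ^ 2)) := by
  set δ : ℝ := ε / (2 * Fintype.card ι) with hδ
  have hδ_sq : (δ ^ 2)⁻¹ = 4 * Fintype.card ι ^ 2 / ε ^ 2 := by
    rw [hδ, div_pow, inv_div]
    ring
  have hδ_pos (i : ι) : 0 < δ := by
    have : 0 < Fintype.card ι := Fintype.card_pos_iff.2 ⟨i⟩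
    positivity
  calc P {ω | ε ≤ ‖∏ i, V i ω - 1‖}
      ≤ P ((⋂ i, D i)ᶜ ∪ ⋃ i, {ω | δ ≤ ‖V i ω - 1‖} ∩ D i) :=
        measure_mono (setOf_le_norm_prod_sub_one_subset V D hε₀ hε)
    _ ≤ P (⋂ i, D i)ᶜ + ∑ i, P ({ω | δ ≤ ‖V i ω - 1‖} ∩ D i) := by
        grw [measure_union_le, measure_iUnion_fintype_le]
    _ ≤ P (⋂ i, D i)ᶜ + ∑ i, ENNReal.ofReal (δ ^ 2)⁻¹ *
          condExpEvent P (D i) (fun ω => ENNReal.ofReal (‖V i ω - 1‖ ^ 2)) := by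
        gcongr with i
        exact measure_le_norm_inter_le_condExpEvent
          ((hV i).sub aestronglyMeasurable_const) (hδ_pos i)
    _ = _ := by rw [← Finset.mul_sum, hδ_sq]

end Chebyshev

theorem stmt8 {Ω : Type*} [MeasurableSpace Ω] (P : Measure Ω) [IsProbabilityMeasure P]
    (T : ℕ) (V : Fin (T + 1) → Ω → ℝ) (hV : ∀ t, Measurable (V t))
    -- `D t` plays the role of `C_{t-1}`, for `t = 0, …, T`; so `D 0 = C_{-1} = Ω`
    -- and `D (Fin.last T) = C_{T-1}`.
    (D : Fin (T + 1) → Set Ω) (hDmeas : ∀ t, MeasurableSet (D t))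
    (hD0 : D 0 = Set.univ) (hmono : Antitone D)
    (hpos : 0 < P (D (Fin.last T))) :
    ∀ ε : ℝ, ε ∈ Set.Ioo (0 : ℝ) 2 →
      P {ω | ε ≤ |(∏ t, V t ω) - 1|} ≤
        P (D (Fin.last T))ᶜ +
          ENNReal.ofReal (4 * (T + 1) ^ 2 / ε ^ 2) *
            ∑ t, condExpEvent P (D t) (fun ω => ENNReal.ofReal ((V t ω - 1) ^ 2)) := by
  rintro ε ⟨hε₀, hε⟩
  have hD : ⋂ t, D t = D (Fin.last T) :=
    (Set.iInter_subset D _).antisymm (Set.subset_iInter fun t => hmono t.le_last)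
  simpa [hD] using stmt8_general V D (fun t => (hV t).aestronglyMeasurable) hε₀ hε.le
end
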